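/- arXiv:1004.5270 — 5 statements merged into one kernel-verified Lean document; each statement's English description precedes it below -/
import Mathlib

section
/- If an action φ of ℤ² on ℝ² by homeomorphisms is minimal, then it is free: for every n ∈ ℤ × ℤ with n ≠ (0,0), the homeomorphism φ(n) has no fixed point. -/
open Set Filter Topology Metric

/-- Lift of the map induced on pairs of distinct points. -/
def DegBr (f : ℂ ≃ₜ ℂ) (d : ℤ) : Prop :=
  ∃ A : ℂ × ℂ → ℂ, Continuous A ∧
    (∀ x s, Complex.exp (A (x, s)) = f (x + Complex.exp s) - f x) ∧
    (∀ x s, A (x, s + 2 * Real.pi * Complex.I) = A (x, s) + d * (2 * Real.pi * Complex.I))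

theorem br_const {X : Type*} [TopologicalSpace X] [PreconnectedSpace X] {E : X → ℂ}
    (hE : Continuous E) (h : ∀ x, Complex.exp (E x) = 1) (x y : X) : E x = E y := by
  have hd : IsCoveringMap (fun z : ℂ ↦ (⟨_, z.exp_ne_zero⟩ : {z : ℂ // z ≠ 0})) :=
    Complex.isCoveringMap_exp
  have := hd.eq_of_comp_eq (g₁ := E) (g₂ := fun _ => E y) hE continuous_const
    (by ext z; simp [h]) y rfl
  exact congrFun this x

theorem br_lift {X : Type*} [TopologicalSpace X] [SimplyConnectedSpace X]
    [LocallyPathConnectedSpace X] {g : X → ℂ} (hg : Continuous g) (h0 : ∀ x, g x ≠ 0) :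
    ∃ E : X → ℂ, Continuous E ∧ ∀ x, Complex.exp (E x) = g x := by
  obtain ⟨x₀⟩ : Nonempty X := inferInstance
  rcases Complex.isCoveringMapOn_exp.existsUnique_continuousMap_lifts
    ⟨g, hg⟩ (Complex.exp_log (h0 x₀)) (fun x ↦ h0 x) with ⟨f, ⟨-, hf⟩, -⟩
  exact ⟨f, f.continuous, fun x => congrFun hf x⟩

theorem br_exp_period (s : ℂ) : Complex.exp (s + 2 * Real.pi * Complex.I) = Complex.exp s := by
  rw [Complex.exp_add, Complex.exp_two_pi_mul_I, mul_one]

theorem br_pi_ne : (2 * Real.pi * Complex.I : ℂ) ≠ 0 := by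
  simp [Real.pi_ne_zero]

theorem DegBr.exists (f : ℂ ≃ₜ ℂ) : ∃ d, DegBr f d := by
  obtain ⟨A, hA, hA2⟩ := br_lift (X := ℂ × ℂ) (g := fun p => f (p.1 + Complex.exp p.2) - f p.1)
    (by fun_prop) (by
      rintro ⟨x, s⟩ h
      rw [sub_eq_zero] at h
      have := f.injective h
      simp [Complex.exp_ne_zero] at this)
  have hc := br_const (X := ℂ × ℂ)
    (E := fun p => A (p.1, p.2 + 2 * Real.pi * Complex.I) - A p) (by fun_prop) (by
      rintro ⟨x, s⟩
      rw [Complex.exp_sub, hA2, hA2]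
      simp only [br_exp_period]
      apply div_self
      rw [← hA2 (x, s)]; exact Complex.exp_ne_zero _)
  have h1 : Complex.exp (A ((0:ℂ), 0 + 2 * Real.pi * Complex.I) - A (0, 0)) = 1 := by
    rw [Complex.exp_sub, hA2, hA2]
    simp only [br_exp_period]
    apply div_self
    rw [← hA2 (0, 0)]; exact Complex.exp_ne_zero _
  obtain ⟨d, hd⟩ := Complex.exp_eq_one_iff.1 h1
  refine ⟨d, A, hA, fun x s => hA2 (x, s), fun x s => ?_⟩
  have := hc (x, s) (0, 0)
  simp only at this
  rw [hd] at this
  rw [← this]; ring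

theorem br_int_shift {B : ℂ → ℂ} {d : ℤ}
    (h : ∀ s, B (s + 2 * Real.pi * Complex.I) = B s + d * (2 * Real.pi * Complex.I))
    (j : ℤ) : ∀ s, B (s + j * (2 * Real.pi * Complex.I)) = B s + (d * j : ℤ) * (2 * Real.pi * Complex.I) := by
  induction j with
  | zero => intro s; simp
  | succ i ih =>
    intro s
    have := h (s + (i : ℤ) * (2 * Real.pi * Complex.I))
    rw [ih] at this
    rw [show s + ((i:ℤ) + 1 : ℤ) * (2 * Real.pi * Complex.I)
      = s + (i : ℤ) * (2 * Real.pi * Complex.I) + 2 * Real.pi * Complex.I by push_cast; ring, this]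
    push_cast; ring
  | pred i ih =>
    intro s
    have := h (s + (-(i:ℤ) - 1 : ℤ) * (2 * Real.pi * Complex.I))
    have h2 := ih s
    rw [show s + (-(i:ℤ) - 1 : ℤ) * (2 * Real.pi * Complex.I) + 2 * Real.pi * Complex.I
      = s + (-(i:ℤ) : ℤ) * (2 * Real.pi * Complex.I) by push_cast; ring, h2] at this
    rw [eq_sub_of_add_eq this.symm]
    push_cast; ring

theorem DegBr.comp {f g : ℂ ≃ₜ ℂ} {d e : ℤ} (hf : DegBr f d) (hg : DegBr g e) :
    DegBr (f.trans g) (e * d) := by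
  obtain ⟨A, hA, hA1, hA2⟩ := hf
  obtain ⟨B, hB, hB1, hB2⟩ := hg
  refine ⟨fun p => B (f p.1, A p), by fun_prop, fun x s => ?_, fun x s => ?_⟩
  · simp only [hB1, hA1, Homeomorph.trans_apply]; congr 2; ring
  · simp only [hA2]
    exact br_int_shift (B := fun s => B (f x, s)) (hB2 (f x)) d _

theorem DegBr.refl : DegBr (Homeomorph.refl ℂ) 1 :=
  ⟨fun p => p.2, by fun_prop, by intro x s; simp, by intro x s; simp⟩

theorem DegBr.unique {f : ℂ ≃ₜ ℂ} {d e : ℤ} (hf : DegBr f d) (hg : DegBr f e) : d = e := by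
  obtain ⟨A, hA, hA1, hA2⟩ := hf
  obtain ⟨B, hB, hB1, hB2⟩ := hg
  have hc := br_const (X := ℂ × ℂ) (E := fun p => A p - B p) (by fun_prop) (by
      rintro ⟨x, s⟩
      rw [Complex.exp_sub, hB1, hA1]
      apply div_self
      rw [← hA1]; exact Complex.exp_ne_zero _) (0, 0 + 2 * Real.pi * Complex.I) (0, 0)
  rw [hA2, hB2] at hc
  have : ((d:ℂ) - e) * (2 * Real.pi * Complex.I) = 0 := by linear_combination hc
  rcases mul_eq_zero.1 this with h | h
  · exact_mod_cast sub_eq_zero.1 h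
  · exact absurd h br_pi_ne

theorem DegBr.sq (f : ℂ ≃ₜ ℂ) : DegBr (f.trans f) 1 := by
  obtain ⟨d, hd⟩ := DegBr.exists f
  obtain ⟨e, he⟩ := DegBr.exists f.symm
  have h1 := hd.comp he
  rw [Homeomorph.self_trans_symm] at h1
  have h2 := h1.unique DegBr.refl
  have h3 := hd.comp hd
  rcases Int.eq_one_or_neg_one_of_mul_eq_one' h2 with ⟨_, h⟩ | ⟨_, h⟩ <;> simpa [h] using h3

theorem DegBr.no_two {f : ℂ ≃ₜ ℂ} (hf : DegBr f 1) (hfp : ∀ z, f z ≠ z) (x : ℂ) :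
    f (f x) ≠ x := by
  intro hx
  obtain ⟨A₀, hA₀, hA1₀, hA2₀⟩ := hf
  obtain ⟨M, hM, hM1⟩ := br_lift (X := ℂ) (g := fun z => f z - z) (by fun_prop)
    (fun z => sub_ne_zero.2 (hfp z))
  have hM2 : ∀ z, z + Complex.exp (M z) = f z := fun z => by rw [hM1]; ring
  have hk := br_const (X := ℂ) (E := fun z => A₀ (z, M z) - M (f z)) (by fun_prop) (by
    intro z
    rw [Complex.exp_sub, hA1₀, hM2, hM1]
    exact div_self (sub_ne_zero.2 (hfp _)))
  have hk1 : Complex.exp (A₀ (0, M 0) - M (f 0)) = 1 := by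
    rw [Complex.exp_sub, hA1₀, hM2, hM1]
    exact div_self (sub_ne_zero.2 (hfp _))
  set c := A₀ (0, M 0) - M (f 0) with hc
  obtain ⟨A, hAdef⟩ : ∃ A : ℂ × ℂ → ℂ, A = fun p => A₀ p - c := ⟨_, rfl⟩
  have hA : Continuous A := by rw [hAdef]; fun_prop
  have hA1 : ∀ x s, Complex.exp (A (x, s)) = f (x + Complex.exp s) - f x := by
    intro x s
    rw [hAdef]; simp only
    rw [Complex.exp_sub, hA1₀, hk1, div_one]
  have hA2 : ∀ x s, A (x, s + 2 * Real.pi * Complex.I) = A (x, s) + 1 * (2 * Real.pi * Complex.I) := by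
    intro x s
    rw [hAdef]; simp only
    rw [hA2₀]; push_cast; ring
  have hA3 : ∀ z, A (z, M z) = M (f z) := by
    intro z
    have := hk z 0
    simp only [← hc] at this
    rw [hAdef]; simp only
    linear_combination this
  -- symmetry
  have hE : ∀ p : ℂ × ℂ, Complex.exp (A (p.1 + Complex.exp p.2, p.2 + Real.pi * Complex.I) - A p
      - Real.pi * Complex.I) = 1 := by
    rintro ⟨z, s⟩
    have hne : f (z + Complex.exp s) - f z ≠ 0 := by rw [← hA1]; exact Complex.exp_ne_zero _
    rw [Complex.exp_sub, Complex.exp_sub, hA1, hA1, Complex.exp_add, Complex.exp_pi_mul_I]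
    simp only [mul_neg, mul_one, add_neg_cancel_right]
    field_simp
    ring
  have hs := br_const (X := ℂ × ℂ) (by fun_prop) hE
  obtain ⟨m, hm⟩ := Complex.exp_eq_one_iff.1 (hE (0, 0))
  have hs2 : ∀ z s, A (z + Complex.exp s, s + Real.pi * Complex.I) = A (z, s) + Real.pi * Complex.I
      + m * (2 * Real.pi * Complex.I) := by
    intro z s
    have := hs (z, s) (0, 0)
    rw [hm] at this
    simp only at this
    linear_combination this
  have hm0 : (m : ℂ) = 0 := by
    have h1 := hs2 (0 + Complex.exp 0) (0 + Real.pi * Complex.I)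
    rw [hs2 0 0, Complex.exp_add, Complex.exp_pi_mul_I] at h1
    rw [show (0:ℂ) + Complex.exp 0 + Complex.exp 0 * -1 = 0 by ring,
      show (0 : ℂ) + Real.pi * Complex.I + Real.pi * Complex.I = 0 + 2 * Real.pi * Complex.I by ring,
      hA2] at h1
    have : (m : ℂ) * (2 * Real.pi * Complex.I) = 0 := by linear_combination (-1/2) * h1
    exact (mul_eq_zero.1 this).resolve_right br_pi_ne
  -- period two
  have h3 : Complex.exp (M (f x)) = - Complex.exp (M x) := by
    rw [hM1, hM1, hx]; ring
  have h4 : Complex.exp (M (f x) - M x - Real.pi * Complex.I) = 1 := by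
    rw [Complex.exp_sub, Complex.exp_sub, h3, Complex.exp_pi_mul_I]
    have := Complex.exp_ne_zero (M x)
    field_simp
  obtain ⟨j, hj⟩ := Complex.exp_eq_one_iff.1 h4
  have h5 : M (f x) = (M x + Real.pi * Complex.I) + j * (2 * Real.pi * Complex.I) := by
    linear_combination hj
  have h6 := hA3 (f x)
  rw [hx, h5, br_int_shift (B := fun s => A (f x, s)) (d := 1) (by simpa using hA2 (f x)) j] at h6
  have h7 := hs2 x (M x)
  rw [hM2, hA3, hm0] at h7
  rw [h7, h5] at h6
  have h8 : ((1 + 2 * j : ℤ) : ℂ) * (2 * Real.pi * Complex.I) = 0 := by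
    push_cast; push_cast at h6; linear_combination h6
  have h9 := (mul_eq_zero.1 h8).resolve_right br_pi_ne
  have h10 : 1 + 2 * j = 0 := by exact_mod_cast h9
  omega

theorem br_bump (c v : ℂ) (r : ℝ) (hv : ‖v‖ < r) :
    ∃ g : ℂ ≃ₜ ℂ, DegBr g 1 ∧ (∀ z, r ≤ dist z c → g z = z) ∧ g c = c + v := by
  have hr : 0 < r := lt_of_le_of_lt (norm_nonneg _) hv
  set β : ℂ → ℝ := fun z => max 0 (1 - dist z c / r) with hβ
  set G : ℂ → ℂ := fun z => z + (β z : ℂ) * v with hG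
  have hβc : Continuous β := by rw [hβ]; fun_prop
  have hGc : Continuous G := by rw [hG]; fun_prop
  have hlip : ∀ x y, |β x - β y| ≤ dist x y / r := by
    intro x y
    have h1 : |β x - β y| ≤ |(1 - dist x c / r) - (1 - dist y c / r)| := by
      have := abs_max_sub_max_le_max 0 (1 - dist x c / r) 0 (1 - dist y c / r)
      simpa [hβ] using this
    refine h1.trans ?_
    rw [show (1 - dist x c / r) - (1 - dist y c / r) = (dist y c - dist x c) / r by ring, abs_div,
      abs_of_pos hr]
    gcongr
    rw [abs_sub_comm]
    exact abs_dist_sub_le x y c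
  have hkey : ∀ x y, ‖G x - G y - (x - y)‖ ≤ (‖v‖ / r) * ‖x - y‖ := by
    intro x y
    rw [show G x - G y - (x - y) = ((β x - β y : ℝ) : ℂ) * v by simp only [hG]; push_cast; ring,
      norm_mul, Complex.norm_real, Real.norm_eq_abs]
    calc _ ≤ dist x y / r * ‖v‖ := by gcongr; exact hlip x y
      _ = _ := by rw [dist_eq_norm]; ring
  have hlt : ‖v‖ / r < 1 := (div_lt_one hr).2 hv
  obtain ⟨κ, hκ⟩ : ∃ κ : NNReal, (κ : ℝ) = ‖v‖ / r :=
    ⟨(‖v‖ / r).toNNReal, Real.coe_toNNReal _ (by positivity)⟩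
  have hap : ApproximatesLinearOn G ((ContinuousLinearEquiv.refl ℝ ℂ : ℂ ≃L[ℝ] ℂ) : ℂ →L[ℝ] ℂ) univ
      κ := by
    intro x _ y _
    simpa [hκ] using hkey x y
  have hN : ‖(((ContinuousLinearEquiv.refl ℝ ℂ : ℂ ≃L[ℝ] ℂ).symm : ℂ ≃L[ℝ] ℂ) : ℂ →L[ℝ] ℂ)‖₊ = 1 := by
    have : (((ContinuousLinearEquiv.refl ℝ ℂ : ℂ ≃L[ℝ] ℂ).symm : ℂ ≃L[ℝ] ℂ) : ℂ →L[ℝ] ℂ) =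
      ContinuousLinearMap.id ℝ ℂ := by ext <;> simp
    rw [this]; simp
  let g : ℂ ≃ₜ ℂ := hap.toHomeomorph G (Or.inr (by
    rw [hN, inv_one, ← NNReal.coe_lt_coe, hκ]; exact hlt))
  have hg : ∀ z, g z = G z := fun z => rfl
  refine ⟨g, ?_, ?_, ?_⟩
  · have hq : ∀ x s, (G (x + Complex.exp s) - G x) / Complex.exp s ∈ Complex.slitPlane := by
      intro x s
      apply Complex.ball_one_subset_slitPlane
      rw [mem_ball, dist_eq_norm]
      have h1 := hkey (x + Complex.exp s) x
      have he := Complex.exp_ne_zero s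
      have h2 : (G (x + Complex.exp s) - G x) / Complex.exp s - 1
        = (G (x + Complex.exp s) - G x - (x + Complex.exp s - x)) / Complex.exp s := by
        field_simp; ring
      rw [h2, norm_div]
      rw [add_sub_cancel_left] at h1 ⊢
      rw [div_lt_iff₀ (norm_pos_iff.2 he)]
      have := norm_pos_iff.2 he
      nlinarith
    refine ⟨fun p => p.2 + Complex.log ((G (p.1 + Complex.exp p.2) - G p.1) / Complex.exp p.2),
      ?_, ?_, ?_⟩
    · refine continuous_snd.add (Continuous.clog ?_ (fun p => hq p.1 p.2))
      exact Continuous.div (by fun_prop) (by fun_prop) (fun p => Complex.exp_ne_zero _)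
    · intro x s
      simp only [hg]
      rw [Complex.exp_add, Complex.exp_log (Complex.slitPlane_ne_zero (hq x s)),
        mul_div_cancel₀ _ (Complex.exp_ne_zero s)]
    · intro x s
      simp only [br_exp_period]; push_cast; ring
  · intro z hz
    rw [hg]
    have : β z = 0 := by
      simp only [hβ]
      apply max_eq_left
      have : 1 ≤ dist z c / r := (one_le_div hr).2 hz
      linarith
    simp [hG, this]
  · rw [hg]
    simp [hG, hβ]

theorem br_move {D : Set ℂ} (hD : IsOpen D) (hc : IsPreconnected D) {a b : ℂ} (ha : a ∈ D)
    (hb : b ∈ D) : ∃ g : ℂ ≃ₜ ℂ, DegBr g 1 ∧ (∀ z, z ∉ D → g z = z) ∧ g a = b := by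
  refine hc.induction₂' (fun a b => ∃ g : ℂ ≃ₜ ℂ, DegBr g 1 ∧ (∀ z, z ∉ D → g z = z) ∧ g a = b)
    ?_ ?_ ha hb
  · intro x hx
    obtain ⟨r, hr, hball⟩ := Metric.isOpen_iff.1 hD x hx
    refine mem_nhdsWithin_of_mem_nhds ?_
    filter_upwards [Metric.ball_mem_nhds x (half_pos hr)] with y hy
    rw [mem_ball] at hy
    constructor
    · obtain ⟨g, h1, h2, h3⟩ := br_bump x (y - x) r (by rw [← dist_eq_norm]; linarith)
      refine ⟨g, h1, fun z hz => h2 z ?_, by rw [h3]; ring⟩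
      by_contra hlt
      exact hz (hball (mem_ball.2 (not_le.1 hlt)))
    · obtain ⟨g, h1, h2, h3⟩ := br_bump y (x - y) (r / 2)
        (by rw [← dist_eq_norm, dist_comm]; linarith)
      refine ⟨g, h1, fun z hz => h2 z ?_, by rw [h3]; ring⟩
      by_contra hlt
      apply hz (hball (mem_ball.2 _))
      have := dist_triangle z y x
      linarith [not_le.1 hlt]
  · rintro x y z _ _ _ ⟨g, h1, h2, h3⟩ ⟨g', h1', h2', h3'⟩
    refine ⟨g.trans g', by simpa using h1.comp h1', fun w hw => ?_, ?_⟩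
    · simp [h2 w hw, h2' w hw]
    · simp [h3, h3']

theorem br_supp {D : Set ℂ} {g : ℂ ≃ₜ ℂ} (h : ∀ z, z ∉ D → g z = z) {z : ℂ} (hz : z ∈ D) :
    g z ∈ D := by
  by_contra hn
  have := h _ hn
  rw [g.injective this] at hn
  exact hn hz

theorem br_free {D : Set ℂ} {g h : ℂ ≃ₜ ℂ} (hg : ∀ z, z ∉ D → g z = z)
    (hfree : ∀ z ∈ D, h z ∉ D) (hfp : ∀ z, h z ≠ z) (z : ℂ) : (h.trans g) z ≠ z := by
  intro he
  rw [Homeomorph.trans_apply] at he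
  by_cases hz : h z ∈ D
  · have h1 := br_supp hg hz
    rw [he] at h1
    exact hfree z h1 hz
  · rw [hg _ hz] at he
    exact hfp z he

theorem br_iter {D : Set ℂ} {g h : ℂ ≃ₜ ℂ} (hg : ∀ z, z ∉ D → g z = z) (y : ℂ) (m : ℕ)
    (hm : ∀ j, 1 ≤ j → j ≤ m → h^[j] y ∉ D) : (h.trans g)^[m] y = h^[m] y := by
  induction m with
  | zero => rfl
  | succ m ih =>
    rw [Function.iterate_succ_apply', ih (fun j h1 h2 => hm j h1 (by omega)),
      Homeomorph.trans_apply, ← Function.iterate_succ_apply' h,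
      hg _ (hm _ (by omega) le_rfl)]

theorem br_nhd {K U : Set ℂ} (hK : IsCompact K) (hc : IsPreconnected K) (hU : IsOpen U)
    (hKU : K ⊆ U) : ∃ D, IsOpen D ∧ IsPreconnected D ∧ K ⊆ D ∧ D ⊆ U := by
  obtain ⟨δ, hδ, h⟩ := hK.exists_thickening_subset_open hU hKU
  refine ⟨thickening δ K, isOpen_thickening, ?_, self_subset_thickening hδ K, h⟩
  rcases K.eq_empty_or_nonempty with rfl | ⟨k, hk⟩
  · simpa using isPreconnected_empty
  refine isPreconnected_of_forall k fun y hy => ?_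
  obtain ⟨z, hz, hyz⟩ := mem_thickening_iff.1 hy
  refine ⟨K ∪ ball z δ, ?_, Or.inl hk, Or.inr hyz, ?_⟩
  · exact union_subset (self_subset_thickening hδ K) (ball_subset_thickening hz δ)
  · exact hc.union z hz (mem_ball_self hδ) (convex_ball z δ).isPreconnected

/-- open free neighbourhood -/
theorem br_free_nhd {K : Set ℂ} (h : ℂ ≃ₜ ℂ) (hK : IsCompact K) (hfree : ∀ z ∈ K, h z ∉ K) :
    ∃ U, IsOpen U ∧ K ⊆ U ∧ ∀ z ∈ U, h z ∉ U := by
  have hd : Disjoint K (h '' K) := by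
    rw [Set.disjoint_left]
    rintro _ hz ⟨w, hw, rfl⟩
    exact hfree w hw hz
  obtain ⟨U, V, hU, hV, hKU, hKV, hUV⟩ := SeparatedNhds.of_isCompact_isCompact hK
    (hK.image h.continuous) hd
  refine ⟨U ∩ h ⁻¹' V, hU.inter (hV.preimage h.continuous),
    fun z hz => ⟨hKU hz, hKV (mem_image_of_mem _ hz)⟩, ?_⟩
  rintro z ⟨_, h2⟩ ⟨h3, _⟩
  exact Set.disjoint_left.1 hUV h3 h2

theorem br_close {K : Set ℂ} {h : ℂ ≃ₜ ℂ} (hh : DegBr h 1) (hfp : ∀ z, h z ≠ z)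
    (hK : IsCompact K) (hc : IsPreconnected K) (hfree : ∀ z ∈ K, h z ∉ K) {x : ℂ} (hx : x ∈ K)
    {i : ℕ} (hi : 1 ≤ i) (hxi : h^[i] x ∈ K) :
    ∃ h' : ℂ ≃ₜ ℂ, DegBr h' 1 ∧ (∀ z, h' z ≠ z) ∧ ∃ j, 1 ≤ j ∧ j ≤ i ∧ h'^[j] x = x := by
  obtain ⟨U, hU, hKU, hUf⟩ := br_free_nhd h hK hfree
  obtain ⟨D, hD, hDc, hKD, hDU⟩ := br_nhd hK hc hU hKU
  have hDf : ∀ z ∈ D, h z ∉ D := fun z hz hz' => hUf z (hDU hz) (hDU hz')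
  classical
  have hex : ∃ j, 1 ≤ j ∧ h^[j] x ∈ D := ⟨i, hi, hKD hxi⟩
  obtain ⟨h1, h2⟩ := Nat.find_spec hex
  have h3 : Nat.find hex ≤ i := Nat.find_min' hex ⟨hi, hKD hxi⟩
  have h4 : ∀ m, m < Nat.find hex → ¬ (1 ≤ m ∧ h^[m] x ∈ D) := fun m hm => Nat.find_min hex hm
  generalize Nat.find hex = j at h1 h2 h3 h4
  obtain ⟨g, hg1, hg2, hg3⟩ := br_move hD hDc h2 (hKD hx)
  refine ⟨h.trans g, by simpa using hh.comp hg1, br_free hg2 hDf hfp, j, h1, h3, ?_⟩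
  obtain ⟨m, rfl⟩ : ∃ m, j = m + 1 := ⟨j - 1, by omega⟩
  rw [Function.iterate_succ_apply', br_iter hg2 x m (fun a ha1 ha2 ha3 => h4 a (by omega) ⟨ha1, ha3⟩),
    Homeomorph.trans_apply, ← Function.iterate_succ_apply' h, hg3]

theorem br_contact (h : ℂ ≃ₜ ℂ) (hfp : ∀ z, h z ≠ z) (x : ℂ) :
    ∃ y : ℂ, ∃ r : ℝ, 0 < r ∧ dist y x = r ∧ dist (h y) x = r ∧
      ∀ z ∈ ball x r, h z ∉ ball x r := by
  have hcont : Continuous (fun z => max (dist z x) (dist (h z) x)) := by fun_prop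
  obtain ⟨y, hy⟩ := hcont.exists_forall_le (by
    refine tendsto_atTop_mono (fun z => le_max_left _ _) ?_
    exact tendsto_dist_right_cocompact_atTop x)
  have hr : 0 < max (dist y x) (dist (h y) x) := by
    by_contra hn
    have h1 := (le_max_left _ _).trans (not_lt.1 hn)
    have h2 := (le_max_right _ _).trans (not_lt.1 hn)
    rw [dist_le_zero] at h1 h2
    rw [h1] at h2
    exact hfp x h2
  have hfree : ∀ z ∈ ball x (max (dist y x) (dist (h y) x)),
      h z ∉ ball x (max (dist y x) (dist (h y) x)) := by
    intro z hz hz'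
    exact absurd (hy z) (not_le.2 (max_lt hz hz'))
  have hcl : closure (ball x (max (dist y x) (dist (h y) x))) =
    closedBall x (max (dist y x) (dist (h y) x)) := closure_ball x hr.ne'
  have hyc : y ∈ closedBall x (max (dist y x) (dist (h y) x)) := mem_closedBall.2 (le_max_left _ _)
  have hpc : h y ∈ closedBall x (max (dist y x) (dist (h y) x)) :=
    mem_closedBall.2 (le_max_right _ _)
  refine ⟨y, _, hr, ?_, ?_, hfree⟩ <;> generalize max (dist y x) (dist (h y) x) = r at *
  · by_contra hne
    have hlt : y ∈ ball x r := lt_of_le_of_ne (mem_closedBall.1 hyc) hne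
    rw [← hcl] at hpc
    obtain ⟨z, hz, hz'⟩ := mem_closure_iff.1 hpc (h '' ball x r)
      (h.isOpenMap _ isOpen_ball) (mem_image_of_mem _ hlt)
    obtain ⟨w, hw, rfl⟩ := hz
    exact hfree w hw hz'
  · by_contra hne
    have hlt : h y ∈ ball x r := lt_of_le_of_ne (mem_closedBall.1 hpc) hne
    rw [← hcl] at hyc
    obtain ⟨z, hz, hz'⟩ := mem_closure_iff.1 hyc (h ⁻¹' ball x r)
      (isOpen_ball.preimage h.continuous) hlt
    exact hfree z hz' hz

theorem br_seg {x y : ℂ} {r : ℝ} (hr : 0 < r) (hy : dist y x = r) {z : ℂ}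
    (hz : z ∈ segment ℝ x y) : z ∈ ball x r ∨ z = y := by
  obtain ⟨t, ⟨ht0, ht1⟩, rfl⟩ := (segment_eq_image_lineMap ℝ x y ▸ hz)
  rcases ht1.lt_or_eq with h | rfl
  · left
    rw [mem_ball, dist_lineMap_left, Real.norm_of_nonneg ht0, dist_comm x y, hy]
    nlinarith
  · right; simp

theorem br_no_periodic : ∀ k : ℕ, 1 ≤ k → ∀ h : ℂ ≃ₜ ℂ, DegBr h 1 → (∀ z, h z ≠ z) →
    ∀ x, h^[k] x ≠ x := by
  intro k
  induction k using Nat.strong_induction_on with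
  | _ k IH =>
  intro hk h hh hfp x₀ hper
  rcases (show k = 1 ∨ k = 2 ∨ 3 ≤ k by omega) with rfl | rfl | hk3
  · exact hfp x₀ hper
  · exact hh.no_two hfp x₀ hper
  -- shortening principle
  have hS : ∀ K : Set ℂ, IsCompact K → IsPreconnected K → (∀ z ∈ K, h z ∉ K) → ∀ w ∈ K,
      ∀ i, 1 ≤ i → i < k → h^[i] w ∉ K := by
    intro K hK hKc hKf w hw i hi hik hwi
    obtain ⟨h', a, b, j, hj1, hj2, hj3⟩ := br_close hh hfp hK hKc hKf hw hi hwi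
    exact IH j (by omega) hj1 h' a b w hj3
  obtain ⟨y, r, hr, hy, hp, hfree⟩ := br_contact h hfp x₀
  set p := h y with hpdef
  have hcl : closure (ball x₀ r) = closedBall x₀ r := closure_ball x₀ hr.ne'
  -- images avoid closures
  have hB1 : ∀ z ∈ ball x₀ r, h z ∉ closedBall x₀ r := by
    intro z hz hz'
    rw [← hcl] at hz'
    obtain ⟨_, ⟨w, hw, rfl⟩, hw'⟩ := mem_closure_iff.1 hz' (h '' ball x₀ r)
      (h.isOpenMap _ isOpen_ball) (mem_image_of_mem _ hz)
    exact hfree w hw hw'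
  have hB2 : ∀ z ∈ closedBall x₀ r, h z ∉ ball x₀ r := by
    intro z hz hz'
    rw [← hcl] at hz
    obtain ⟨w, hw, hw'⟩ := mem_closure_iff.1 hz (h ⁻¹' ball x₀ r)
      (isOpen_ball.preimage h.continuous) hz'
    exact hfree w hw' hw
  have hyB : y ∈ closedBall x₀ r := mem_closedBall.2 hy.le
  have hpB : p ∈ closedBall x₀ r := mem_closedBall.2 hp.le
  have hynB : y ∉ ball x₀ r := fun h => absurd hy (mem_ball.1 h).ne
  have hpnB : p ∉ ball x₀ r := fun h => absurd hp (mem_ball.1 h).ne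
  have hyp : p ≠ y := hfp y
  have hx₀B : x₀ ∈ ball x₀ r := mem_ball_self hr
  -- any segment in the ball is free
  have hSB : ∀ w ∈ ball x₀ r, ∀ i, 1 ≤ i → i < k → h^[i] w ∉ ball x₀ r := by
    intro w hw i hi hik hwi
    have hsub : segment ℝ w (h^[i] w) ⊆ ball x₀ r := (convex_ball x₀ r).segment_subset hw hwi
    refine hS (segment ℝ w (h^[i] w)) ?_ (convex_segment _ _).isPreconnected
      (fun z hz hz' => hfree z (hsub hz) (hsub hz')) w (left_mem_segment _ _ _) i hi hik
      (right_mem_segment _ _ _)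
    rw [segment_eq_image_lineMap]
    exact isCompact_Icc.image (by fun_prop)
  have hcomp : ∀ a b : ℂ, IsCompact (segment ℝ a b) := by
    intro a b
    rw [segment_eq_image_lineMap]
    exact isCompact_Icc.image (by fun_prop)
  have hsy : ∀ z ∈ segment ℝ x₀ y, z ∈ ball x₀ r ∨ z = y := fun z hz => br_seg hr hy hz
  have hsp : ∀ z ∈ segment ℝ x₀ p, z ∈ ball x₀ r ∨ z = p := fun z hz => br_seg hr hp hz
  have hfy : ∀ z ∈ segment ℝ x₀ y, h z ∉ segment ℝ x₀ y := by
    intro z hz hz'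
    rcases hsy z hz with h1 | rfl <;> rcases hsy _ hz' with h2 | h2
    · exact hfree _ h1 h2
    · exact hB1 _ h1 (h2 ▸ hyB)
    · exact hpnB h2
    · exact hyp h2
  have hfpp : ∀ z ∈ segment ℝ x₀ p, h z ∉ segment ℝ x₀ p := by
    intro z hz hz'
    rcases hsp z hz with h1 | h1 <;> rcases hsp _ hz' with h2 | h2
    · exact hfree _ h1 h2
    · exact hB1 _ h1 (h2 ▸ hpB)
    · exact hB2 _ (h1 ▸ hpB) h2
    · rw [h1] at h2; exact hfp _ h2
  -- orbit avoids things
  have hoy : ∀ i, 1 ≤ i → i < k → h^[i] x₀ ∉ segment ℝ x₀ y := fun i hi hik =>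
    hS _ (hcomp _ _) (convex_segment _ _).isPreconnected hfy x₀ (left_mem_segment _ _ _) i hi hik
  have hop : ∀ i, 1 ≤ i → i < k → h^[i] x₀ ∉ segment ℝ x₀ p := fun i hi hik =>
    hS _ (hcomp _ _) (convex_segment _ _).isPreconnected hfpp x₀ (left_mem_segment _ _ _) i hi hik
  set b := midpoint ℝ x₀ p with hb
  have hbp : segment ℝ b p ⊆ segment ℝ x₀ p :=
    (convex_segment _ _).segment_subset (midpoint_mem_segment _ _) (right_mem_segment _ _ _)
  have hbd : dist b x₀ = r / 2 := by
    rw [hb, dist_midpoint_left, ← hp, dist_comm x₀ p]; simp; ring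
  have hdisj : ∀ z ∈ segment ℝ x₀ y, z ∉ segment ℝ b p := by
    intro z hz hz'
    rw [segment_eq_image_lineMap] at hz hz'
    obtain ⟨t, ⟨ht0, ht1⟩, rfl⟩ := hz
    obtain ⟨s, ⟨hs0, hs1⟩, hs⟩ := hz'
    have e1 : ((1 + s) / 2 : ℝ) • (p - x₀) = t • (y - x₀) := by
      rw [hb, midpoint_eq_smul_add, AffineMap.lineMap_apply_module, AffineMap.lineMap_apply_module] at hs
      simp only [Complex.real_smul] at hs ⊢
      push_cast at hs ⊢
      simp only [invOf_eq_inv, Complex.ofReal_inv, Complex.ofReal_ofNat] at hs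
      linear_combination hs
    have e2 := congrArg norm e1
    rw [norm_smul, norm_smul, ← dist_eq_norm, ← dist_eq_norm, hy, hp,
      Real.norm_of_nonneg ht0, Real.norm_of_nonneg (by linarith)] at e2
    have e3 : (1 + s) / 2 = t := mul_right_cancel₀ hr.ne' e2
    rw [e3] at e1
    have e4 : t ≠ 0 := by linarith
    have e5 := smul_right_injective ℂ e4 e1
    exact hyp (sub_left_injective e5)
  -- the second compact set
  set K := segment ℝ b p ∪ h '' segment ℝ x₀ y with hKdef
  have hKc : IsCompact K := (hcomp _ _).union ((hcomp _ _).image h.continuous)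
  have hKconn : IsPreconnected K := by
    refine IsPreconnected.union p (right_mem_segment _ _ _)
      (mem_image_of_mem _ (right_mem_segment _ _ _)) (convex_segment _ _).isPreconnected
      ((convex_segment _ _).isPreconnected.image _ h.continuous.continuousOn)
  have h2B : ∀ w ∈ segment ℝ x₀ y, h (h w) ∉ ball x₀ r := by
    intro w hw hw2
    rcases hsy w hw with h1 | rfl
    · exact hSB w h1 2 (by omega) (by omega) hw2
    · exact hB2 _ hpB hw2
  have hKB : ∀ z ∈ K, h z ∉ ball x₀ r := by
    rintro z (hz | ⟨w, hw, rfl⟩) hz'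
    · rcases hsp z (hbp hz) with h1 | h1
      · exact hfree z h1 hz'
      · exact hB2 _ (h1 ▸ hpB) hz'
    · exact h2B w hw hz'
  have hKfree : ∀ z ∈ K, h z ∉ K := by
    rintro z (hz | ⟨w, hw, rfl⟩) (hz' | ⟨w', hw', he⟩)
    · exact hfpp z (hbp hz) (hbp hz')
    · rw [h.injective he] at hw'
      exact hdisj z hw' hz
    · rcases hsp _ (hbp hz') with h1 | h1
      · exact h2B w hw h1
      · have h2 : h w = y := h.injective h1
        rcases hsy w hw with h3 | rfl
        · exact hB1 w h3 (h2 ▸ hyB)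
        · exact hyp h2
    · exact hfy w hw (h.injective he ▸ hw')
  have hKorb : ∀ i, 2 ≤ i → i < k → h^[i] x₀ ∉ K := by
    rintro i hi hik (hz | ⟨w, hw, he⟩)
    · exact hop i (by omega) hik (hbp hz)
    · obtain ⟨m, rfl⟩ : ∃ m, i = m + 1 := ⟨i - 1, by omega⟩
      rw [Function.iterate_succ_apply'] at he
      rw [h.injective he] at hw
      exact hoy m (by omega) (by omega) hw
  -- neighbourhoods
  obtain ⟨U, hU, hKU, hUf⟩ := br_free_nhd h hKc hKfree
  have hPfin : ((fun i => h^[i] x₀) '' (Set.Ico 2 k)).Finite := (Set.finite_Ico 2 k).image _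
  obtain ⟨D₂, hD₂, hD₂c, hKD₂, hD₂U⟩ := br_nhd hKc hKconn
    (U := (U ∩ h ⁻¹' (closedBall x₀ (3 * r / 4))ᶜ) ∩ ((fun i => h^[i] x₀) '' (Set.Ico 2 k))ᶜ)
    ((hU.inter (isClosed_closedBall.isOpen_compl.preimage h.continuous)).inter
      hPfin.isClosed.isOpen_compl)
    (by
      intro z hz
      refine ⟨⟨hKU hz, fun hz' => hKB z hz ?_⟩, ?_⟩
      · rw [mem_ball]; have := mem_closedBall.1 hz'; linarith
      · rintro ⟨i, ⟨hi1, hi2⟩, rfl⟩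
        exact hKorb i hi1 hi2 hz)
  have hsub : ball x₀ (3 * r / 4) ⊆ ball x₀ r := ball_subset_ball (by linarith)
  obtain ⟨g₁, hg1, hg1s, hg1b⟩ := br_move (D := ball x₀ (3 * r / 4)) isOpen_ball
    (convex_ball _ _).isPreconnected (a := x₀) (b := b) (mem_ball_self (by linarith))
    (by rw [mem_ball, hbd]; linarith)
  obtain ⟨g₂, hg2, hg2s, hg2b⟩ := br_move hD₂ hD₂c (a := b) (b := h x₀)
    (hKD₂ (Or.inl (left_mem_segment _ _ _)))
    (hKD₂ (Or.inr (mem_image_of_mem _ (left_mem_segment _ _ _))))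
  have hf1 : ∀ z, (h.trans g₁) z ≠ z :=
    br_free hg1s (fun z hz hz' => hfree z (hsub hz) (hsub hz')) hfp
  have hf2 : ∀ z, ((h.trans g₁).trans g₂) z ≠ z := by
    refine br_free hg2s (fun z hz hz' => ?_) hf1
    have h1 := (hD₂U hz).1
    rw [Homeomorph.trans_apply, hg1s _ (fun hh => h1.2 (ball_subset_closedBall hh))] at hz'
    exact hUf z h1.1 (hD₂U hz').1.1
  refine IH (k - 1) (by omega) (by omega) ((h.trans g₁).trans g₂)
    (by simpa using (hh.comp hg1).comp hg2) hf2 (h x₀) ?_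
  obtain ⟨m, rfl⟩ : ∃ m, k = m + 2 := ⟨k - 2, by omega⟩
  have hi1 : ∀ n, n ≤ m → (h.trans g₁)^[n] (h x₀) = h^[n] (h x₀) := by
    intro n hn
    refine br_iter hg1s _ _ (fun j hj1 hj2 hj3 => ?_)
    rw [← Function.iterate_succ_apply] at hj3
    exact hSB x₀ hx₀B (j + 1) (by omega) (by omega) (hsub hj3)
  have hi2 : ((h.trans g₁).trans g₂)^[m] (h x₀) = h^[m] (h x₀) := by
    rw [br_iter hg2s, hi1 m le_rfl]
    intro j hj1 hj2 hj3
    rw [hi1 j hj2, ← Function.iterate_succ_apply] at hj3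
    exact (hD₂U hj3).2 ⟨j + 1, ⟨by omega, by omega⟩, rfl⟩
  show ((h.trans g₁).trans g₂)^[m + 1] (h x₀) = h x₀
  rw [Function.iterate_succ_apply', hi2, Homeomorph.trans_apply, Homeomorph.trans_apply,
    ← Function.iterate_succ_apply' h, ← Function.iterate_succ_apply, hper, hg1b, hg2b]

theorem br_reps (n : ℤ × ℤ) (hn : n ≠ (0, 0)) : ∃ u : ℤ × ℤ, ∃ R : Set (ℤ × ℤ), R.Finite ∧
    ∀ m : ℤ × ℤ, ∃ r ∈ R, ∃ p q : ℤ, m = r + p • n + q • (u + u) := by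
  obtain ⟨a, b⟩ := n
  by_cases ha : a = 0
  · have hb : b ≠ 0 := by rintro rfl; exact hn (by rw [ha])
    refine ⟨(1, 0), Set.Icc 0 1 ×ˢ Set.Icc 0 |b|, (Set.finite_Icc _ _).prod (Set.finite_Icc _ _), ?_⟩
    rintro ⟨m1, m2⟩
    refine ⟨((m1 - (m2 / b) * a) % 2, m2 % b), ⟨⟨by omega, by omega⟩,
      ⟨Int.emod_nonneg _ hb, (Int.emod_lt_abs _ hb).le⟩⟩, m2 / b, (m1 - (m2 / b) * a) / 2, ?_⟩
    ext
    · simp; omega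
    · simp; linarith [Int.emod_add_mul_ediv m2 b, mul_comm b (m2 / b)]
  · refine ⟨(0, 1), Set.Icc 0 |a| ×ˢ Set.Icc 0 1, (Set.finite_Icc _ _).prod (Set.finite_Icc _ _), ?_⟩
    rintro ⟨m1, m2⟩
    refine ⟨(m1 % a, (m2 - (m1 / a) * b) % 2), ⟨⟨Int.emod_nonneg _ ha, (Int.emod_lt_abs _ ha).le⟩,
      ⟨by simp only; omega, by simp only; omega⟩⟩, m1 / a, (m2 - (m1 / a) * b) / 2, ?_⟩
    ext
    · simp; linarith [Int.emod_add_mul_ediv m1 a, mul_comm a (m1 / a)]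
    · simp; omega

theorem br_main (φ : ℤ × ℤ → (ℂ ≃ₜ ℂ)) (hφ : ∀ m n z, φ (m + n) z = φ m (φ n z))
    (hmin : ∀ x : ℂ, Dense (Set.range fun n : ℤ × ℤ => φ n x)) (n : ℤ × ℤ) (hn : n ≠ (0, 0))
    (x : ℂ) : φ n x ≠ x := by
  intro hx
  -- a fixed point forces the identity
  have hfix : ∀ m x, φ m x = x → ∀ z, φ m z = z := by
    intro m x hx z
    have hcl : IsClosed {z | φ m z = z} := isClosed_eq (φ m).continuous continuous_id
    have hsub : (Set.range fun n : ℤ × ℤ => φ n x) ⊆ {z | φ m z = z} := by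
      rintro _ ⟨l, rfl⟩
      show φ m (φ l x) = φ l x
      rw [← hφ, add_comm, hφ, hx]
    exact hcl.closure_subset_iff.2 hsub (hmin x z)
  have hid := hfix n x hx
  have h0 : ∀ z, φ 0 z = z := by
    intro z
    apply (φ 0).injective
    rw [← hφ, add_zero]
  have hneg : ∀ m z, φ (-m) (φ m z) = z := by
    intro m z
    rw [← hφ, neg_add_cancel, h0]
  have hpn : ∀ (p : ℤ) z, φ (p • n) z = z := by
    intro p z
    induction p with
    | zero => simpa using h0 z
    | succ i ih => rw [add_smul, hφ, one_smul, hid, ih]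
    | pred i ih =>
      rw [sub_smul, sub_eq_add_neg, hφ, one_smul]
      have := hneg n z
      rw [hid] at this
      rw [this, ih]
  obtain ⟨u, R, hR, hrep⟩ := br_reps n hn
  set w := u + u with hw
  set O : Set ℂ := Set.range (fun q : ℤ => φ (q • w) x) with hO
  have hcover : ⋃ r : R, (φ r.1) '' closure O = univ := by
    have hcl : IsClosed (⋃ r : R, (φ r.1) '' closure O) := by
      have := hR.to_subtype
      exact isClosed_iUnion_of_finite fun r => (φ r.1).isClosedMap _ isClosed_closure
    rw [← univ_subset_iff, ← (hmin x).closure_eq]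
    refine hcl.closure_subset_iff.2 ?_
    rintro _ ⟨m, rfl⟩
    obtain ⟨r, hr, p, q, rfl⟩ := hrep m
    refine mem_iUnion.2 ⟨⟨r, hr⟩, φ (q • w) x, subset_closure ⟨q, rfl⟩, ?_⟩
    simp only
    rw [hφ, hφ, hpn]
  have hint : (interior (closure O)).Nonempty := by
    have := hR.to_subtype
    obtain ⟨r, hr⟩ := nonempty_interior_of_iUnion_of_closed
      (fun r : R => (φ r.1).isClosedMap _ isClosed_closure) hcover
    rw [← (φ r.1).image_interior] at hr
    exact hr.of_image
  obtain ⟨z, hz⟩ := hint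
  obtain ⟨_, hzU, ⟨q₀, rfl⟩⟩ := mem_closure_iff.1 (interior_subset hz) _ isOpen_interior hz
  simp only at hzU
  -- translate
  have hinv : ∀ (q : ℤ) y, φ (q • w) y ∈ closure O → y ∈ closure O := by
    intro q y hy
    have h1 : y ∈ (φ (-(q • w))) '' closure O := ⟨_, hy, hneg _ _⟩
    rw [(φ (-(q • w))).image_closure] at h1
    refine closure_mono ?_ h1
    rintro _ ⟨_, ⟨q', rfl⟩, rfl⟩
    refine ⟨-q + q', ?_⟩
    simp only
    rw [add_smul, hφ, neg_smul]
  set V := φ (q₀ • w) ⁻¹' interior (closure O) with hV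
  have hVo : IsOpen V := isOpen_interior.preimage (φ (q₀ • w)).continuous
  have hxV : x ∈ V := hzU
  have hVO : V ⊆ closure O := fun y hy => hinv q₀ y (interior_subset hy)
  have hrec : ∀ W : Set ℂ, IsOpen W → x ∈ W → ∃ q : ℤ, φ (q • w) x ≠ x ∧ φ (q • w) x ∈ W := by
    intro W hWo hxW
    have hne : ((W ∩ V) \ {x}).Nonempty := by
      have hmem : W ∩ V ∈ 𝓝 x := (hWo.inter hVo).mem_nhds ⟨hxW, hxV⟩
      have : ((W ∩ V) ∩ {x}ᶜ) ∈ 𝓝[≠] x := 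
        inter_mem (mem_nhdsWithin_of_mem_nhds hmem) self_mem_nhdsWithin
      exact (NormedField.nhdsNE_neBot x).nonempty_of_mem this
    obtain ⟨y, ⟨hyW, hyV⟩, hyx⟩ := hne
    have hop : IsOpen ((W ∩ V) \ {x}) := (hWo.inter hVo).sdiff isClosed_singleton
    obtain ⟨_, h1, ⟨q, rfl⟩⟩ := mem_closure_iff.1 (hVO hyV) _ hop ⟨⟨hyW, hyV⟩, hyx⟩
    exact ⟨q, h1.2, h1.1.1⟩
  -- the map
  set g : ℂ ≃ₜ ℂ := (φ u).trans (φ u) with hg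
  have hgw : ∀ z, g z = φ w z := fun z => by rw [hw, hφ]; rfl
  have hgit : ∀ (j : ℕ) z, g^[j] z = φ ((j : ℤ) • w) z := by
    intro j
    induction j with
    | zero => intro z; simp [h0]
    | succ j ih =>
      intro z
      rw [Function.iterate_succ_apply', ih, hgw, ← hφ]
      push_cast
      rw [add_smul, one_smul, add_comm]
  have hgdeg : DegBr g 1 := DegBr.sq (φ u)
  have hgfp : ∀ z, g z ≠ z := by
    intro z hz
    rw [hgw] at hz
    have h1 := hfix w z hz
    obtain ⟨q, hq, -⟩ := hrec univ isOpen_univ (mem_univ _)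
    have h2 : ∀ (j : ℕ), φ ((j : ℤ) • w) x = x := by
      intro j
      rw [← hgit]
      exact Function.iterate_fixed (by rw [hgw, h1]) j
    apply hq
    rcases Int.eq_nat_or_neg q with ⟨j, rfl | rfl⟩
    · exact h2 j
    · have := hneg ((j : ℤ) • w) x
      rw [h2] at this
      rw [neg_smul, this]
  -- free ball
  obtain ⟨U, hU, hxU, hUf⟩ := br_free_nhd (K := {x}) g isCompact_singleton (by
    rintro z rfl h; exact hgfp _ h)
  obtain ⟨δ, hδ, hball⟩ := Metric.isOpen_iff.1 hU x (hxU rfl)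
  obtain ⟨q, hq, hqB⟩ := hrec (ball x (δ / 2)) isOpen_ball (mem_ball_self (half_pos hδ))
  have hsub : closedBall x (δ / 2) ⊆ U := (closedBall_subset_ball (by linarith)).trans hball
  have hKf : ∀ z ∈ closedBall x (δ / 2), g z ∉ closedBall x (δ / 2) :=
    fun z hz hz' => hUf z (hsub hz) (hsub hz')
  have hend : ∀ y ∈ closedBall x (δ / 2), ∀ j : ℕ, 1 ≤ j → g^[j] y ∉ closedBall x (δ / 2) := by
    intro y hy j hj hyj
    obtain ⟨h', a, b, i, hi1, -, hi3⟩ := br_close hgdeg hgfp (isCompact_closedBall x (δ / 2))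
      (convex_closedBall _ _).isPreconnected hKf hy hj hyj
    exact br_no_periodic i hi1 h' a b y hi3
  have hxc : x ∈ closedBall x (δ / 2) := mem_closedBall_self (half_pos hδ).le
  have hq0 : q ≠ 0 := by
    rintro rfl
    apply hq
    simp [h0]
  rcases Int.eq_nat_or_neg q with ⟨j, rfl | rfl⟩
  · refine hend x hxc j (by omega) ?_
    rw [hgit]; exact ball_subset_closedBall hqB
  · refine hend _ (ball_subset_closedBall hqB) j (by omega) ?_
    rw [hgit, ← hφ, neg_smul, add_neg_cancel, h0]
    exact hxc

/-- A minimal action of ℤ² on the plane by homeomorphisms is free: if every orbit of the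
action `φ` (a group homomorphism from `ℤ × ℤ` to the homeomorphism group of `ℝ²`, encoded by
`φ (m + n) = φ m ∘ φ n`) is dense, then for every `n ≠ (0, 0)` the homeomorphism `φ n` has
no fixed point. -/
theorem minimal_Z2_action_is_free
    (φ : ℤ × ℤ → ((ℝ × ℝ) ≃ₜ (ℝ × ℝ)))
    (hφ : ∀ m n : ℤ × ℤ, φ (m + n) = (φ n).trans (φ m))
    (hmin : ∀ x : ℝ × ℝ, Dense (Set.range fun n : ℤ × ℤ => φ n x)) :
    ∀ n : ℤ × ℤ, n ≠ (0, 0) → ∀ x : ℝ × ℝ, φ n x ≠ x := by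
  intro n hn x hx
  let e : ℂ ≃ₜ ℝ × ℝ := Complex.equivRealProdCLM.toHomeomorph
  refine br_main (fun m => (e.trans (φ m)).trans e.symm) ?_ ?_ n hn (e.symm x) ?_
  · intro m n z
    simp [hφ]
  · intro z
    have := e.symm.surjective.denseRange.dense_image e.symm.continuous (hmin (e z))
    rw [← range_comp] at this
    exact this
  · simp [hx]
end

section
/- Let g be a homeomorphism of ℝ² and p ≥ 1 an integer such that g^p is the translation z ↦ z + v by some nonzero vector v ∈ ℝ². Then the ℤ-action generated by g is free and properly discontinuous: for every n ≠ 0 the map gⁿ has no fixed point, and every point of ℝ² has an open neighborhood U such that gⁿ(U) ∩ U = ∅ for all n ≠ 0. -/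
theorem aux_cont (g : (ℝ × ℝ) ≃ₜ (ℝ × ℝ)) (n : ℤ) : Continuous (⇑(g.toEquiv ^ n)) := by
  have hnat : ∀ k : ℕ, Continuous (⇑(g.toEquiv ^ k)) := by
    intro k
    induction k with
    | zero => simpa using continuous_id
    | succ k ih =>
      rw [pow_succ]
      exact ih.comp g.continuous
  have hnat' : ∀ k : ℕ, Continuous (⇑((g.toEquiv⁻¹ : Equiv.Perm (ℝ × ℝ)) ^ k)) := by
    intro k
    induction k with
    | zero => simpa using continuous_id
    | succ k ih =>
      rw [pow_succ]
      exact ih.comp g.symm.continuous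
  obtain ⟨k, rfl | rfl⟩ := n.eq_nat_or_neg
  · simpa using hnat k
  · have := hnat' k
    rwa [inv_pow, ← zpow_natCast, ← zpow_neg] at this

theorem aux_trans (h : Equiv.Perm (ℝ × ℝ)) (v : ℝ × ℝ) (hh : ∀ z, h z = z + v) (q : ℤ)
    (z : ℝ × ℝ) : (h ^ q) z = z + (q : ℝ) • v := by
  have hi : ∀ z, h⁻¹ z = z - v := by
    intro z
    rw [Equiv.Perm.inv_eq_iff_eq, hh, sub_add_cancel]
  induction q using Int.induction_on generalizing z with
  | zero => simp
  | succ i ih =>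
    rw [zpow_add_one, Equiv.Perm.mul_apply, ih, hh]
    push_cast
    module
  | pred i ih =>
    rw [zpow_sub_one, Equiv.Perm.mul_apply, ih, hi]
    push_cast
    module

/-- If some power `g ^ p` (with `p ≥ 1`) of a homeomorphism `g` of the plane is the
translation by a nonzero vector `v`, then the ℤ-action generated by `g` is free and
properly discontinuous: every nontrivial iterate `g ^ n` is fixed point free, and every
point has an open neighborhood `U` with `g ^ n '' U ∩ U = ∅` for all `n ≠ 0`. -/
theorem free_properly_discontinuous_of_pow_eq_translation
    (g : (ℝ × ℝ) ≃ₜ (ℝ × ℝ)) (p : ℕ) (hp : 1 ≤ p) (v : ℝ × ℝ) (hv : v ≠ 0)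
    (hgp : ∀ z : ℝ × ℝ, (g.toEquiv ^ p) z = z + v) :
    (∀ n : ℤ, n ≠ 0 → ∀ x : ℝ × ℝ, (g.toEquiv ^ n) x ≠ x) ∧
    (∀ x : ℝ × ℝ, ∃ U : Set (ℝ × ℝ), IsOpen U ∧ x ∈ U ∧
      ∀ n : ℤ, n ≠ 0 → (⇑(g.toEquiv ^ n) '' U) ∩ U = ∅) := by
  have key : ∀ q : ℤ, ∀ z, (g.toEquiv ^ ((p : ℤ) * q)) z = z + (q : ℝ) • v := by
    intro q z
    rw [zpow_mul, zpow_natCast]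
    exact aux_trans _ v hgp q z
  have free : ∀ n : ℤ, n ≠ 0 → ∀ x : ℝ × ℝ, (g.toEquiv ^ n) x ≠ x := by
    intro n hn x hx
    have h1 := key n x
    rw [mul_comm, zpow_mul, zpow_natCast] at h1
    have h2 : ∀ k : ℕ, ((g.toEquiv ^ n) ^ k) x = x := by
      intro k
      induction k with
      | zero => simp
      | succ k ih => rw [pow_succ, Equiv.Perm.mul_apply, hx, ih]
    rw [h2] at h1
    have h3 : (n : ℝ) • v = 0 := by simpa using h1.symm
    rcases smul_eq_zero.1 h3 with h | h
    · exact hn (by exact_mod_cast h)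
    · exact hv h
  refine ⟨free, fun x => ?_⟩
  have hp0 : (0 : ℤ) < p := by exact_mod_cast hp
  have hvn : 0 < ‖v‖ := norm_pos_iff.2 hv
  obtain ⟨M, hM⟩ : ∃ M : ℝ, ∀ r ∈ Finset.range p, ‖(g.toEquiv ^ (r : ℤ)) x‖ < M := by
    refine ⟨∑ r ∈ Finset.range p, ‖(g.toEquiv ^ (r : ℤ)) x‖ + 1, fun r hr => ?_⟩
    have := Finset.single_le_sum (f := fun r : ℕ => ‖(g.toEquiv ^ (r : ℤ)) x‖)
      (fun i _ => norm_nonneg _) hr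
    linarith
  obtain ⟨Q, hQ⟩ := exists_nat_gt ((M + (‖x‖ + 1)) / ‖v‖)
  have e1 : ∀ᶠ y : (ℝ × ℝ) × (ℝ × ℝ) in nhds (x, x), ‖y.2‖ < ‖x‖ + 1 :=
    (continuous_snd.norm.continuousAt).eventually_lt continuousAt_const (by simp)
  have e2 : ∀ᶠ y : (ℝ × ℝ) × (ℝ × ℝ) in nhds (x, x),
      ∀ r ∈ Finset.range p, ‖(g.toEquiv ^ (r : ℤ)) y.1‖ < M := by
    rw [Finset.eventually_all]
    intro r hr
    exact (((aux_cont g r).comp continuous_fst).norm.continuousAt).eventually_lt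
      continuousAt_const (hM r hr)
  have e3 : ∀ᶠ y : (ℝ × ℝ) × (ℝ × ℝ) in nhds (x, x),
      ∀ n ∈ Finset.Icc (-(p * (Q + 1) : ℤ)) (p * (Q + 1)), n ≠ 0 →
        (g.toEquiv ^ n) y.1 ≠ y.2 := by
    rw [Finset.eventually_all]
    intro n _
    by_cases hn : n = 0
    · simp [hn]
    · have : ∀ᶠ y : (ℝ × ℝ) × (ℝ × ℝ) in nhds (x, x), (g.toEquiv ^ n) y.1 ≠ y.2 :=
        (isOpen_ne_fun ((aux_cont g n).comp continuous_fst) continuous_snd).mem_nhds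
          (free n hn x)
      exact this.mono fun y hy _ => hy
  have e4 : ∀ᶠ y : (ℝ × ℝ) × (ℝ × ℝ) in nhds (x, x),
      ∀ n : ℤ, n ≠ 0 → (g.toEquiv ^ n) y.1 ≠ y.2 := by
    filter_upwards [e1, e2, e3] with y h1 h2 h3 n hn heq
    refine h3 n ?_ hn heq
    have hr0 := Int.emod_nonneg n hp0.ne'
    have hrp := Int.emod_lt_of_pos n hp0
    have hdiv := Int.mul_ediv_add_emod n p
    obtain ⟨r, hr⟩ := Int.eq_ofNat_of_zero_le hr0
    have hr2 := h2 r (by rw [Finset.mem_range]; omega)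
    have h5 : y.2 = (g.toEquiv ^ (r : ℤ)) y.1 + ((n / p : ℤ) : ℝ) • v := by
      rw [← heq, ← key, ← Equiv.Perm.mul_apply, ← zpow_add, ← hr, hdiv]
    have h6 : ((n / p : ℤ) : ℝ) • v = y.2 - (g.toEquiv ^ (r : ℤ)) y.1 := by
      rw [h5]; abel
    have h7 : |((n / p : ℤ) : ℝ)| * ‖v‖ < M + (‖x‖ + 1) := by
      rw [← Real.norm_eq_abs, ← norm_smul, h6]
      have := norm_sub_le y.2 ((g.toEquiv ^ (r : ℤ)) y.1)
      linarith
    have h8 : |((n / p : ℤ) : ℝ)| < Q := ((lt_div_iff₀ hvn).2 h7).trans hQ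
    have h9 : |(n / p : ℤ)| < (Q : ℤ) := by exact_mod_cast h8
    rw [abs_lt] at h9
    rw [Finset.mem_Icc]
    constructor <;> nlinarith [h9.1, h9.2]
  rw [nhds_prod_eq, Filter.eventually_prod_self_iff (r := fun z w => ∀ n : ℤ, n ≠ 0 → (g.toEquiv ^ n) z ≠ w)] at e4
  obtain ⟨t, ht, h⟩ := e4
  obtain ⟨U, hUt, hU, hxU⟩ := mem_nhds_iff.1 ht
  refine ⟨U, hU, hxU, fun n hn => ?_⟩
  rw [Set.eq_empty_iff_forall_notMem]
  rintro w ⟨⟨z, hz, hzw⟩, hw⟩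
  exact h z (hUt hz) w (hUt hw) n hn hzw
end

section
/- Let g₁ and g₂ be two commuting Brouwer homeomorphisms of ℝ², and let D be a nonempty open disk in ℝ² such that D ∩ g₁(D) = ∅ and D ∩ g₂(D) = ∅. Define the return-time set R = {(n₁,n₂) ∈ ℤ × ℤ : g₁^{n₁}(g₂^{n₂}(D)) ∩ D ≠ ∅}. Then either R ∖ {(0,0)} ⊆ {(n₁,n₂) : n₁·n₂ > 0} or R ∖ {(0,0)} ⊆ {(n₁,n₂) : n₁·n₂ < 0}. -/
/-- A map `g : ℝ² → ℝ²` is isotopic to the identity: there is a continuous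
`H : [0,1] × ℝ² → ℝ²` with `H 0 = id`, `H 1 = g`, and `H t` a homeomorphism for every `t`. -/
def IsotopicToIdentity (g : ℝ × ℝ → ℝ × ℝ) : Prop :=
  ∃ H : unitInterval × (ℝ × ℝ) → ℝ × ℝ, Continuous H ∧
    (∀ z : ℝ × ℝ, H (0, z) = z) ∧ (∀ z : ℝ × ℝ, H (1, z) = g z) ∧
    ∀ t : unitInterval, ∃ e : (ℝ × ℝ) ≃ₜ (ℝ × ℝ), ∀ z : ℝ × ℝ, H (t, z) = e z

/-- A Brouwer homeomorphism: an orientation-preserving (i.e. isotopic to the identity)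
homeomorphism of the plane without fixed points. -/
def IsBrouwer (g : (ℝ × ℝ) ≃ₜ (ℝ × ℝ)) : Prop :=
  IsotopicToIdentity g ∧ ∀ x : ℝ × ℝ, g x ≠ x


section Brouwer
open Set Topology

lemma exp_lift_const {A : Type*} [TopologicalSpace A] [PreconnectedSpace A] (f : A → ℂ)
    (hf : Continuous f) (w : ℂ) (h : ∀ a, Complex.exp (f a) = w) (a b : A) : f a = f b := by
  have := Complex.isCoveringMap_exp.eq_of_comp_eq (g₁ := f) (g₂ := fun _ => f b) hf
    continuous_const (by ext x; simp [h]) b rfl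
  exact congrFun this a

/-- A fixed point free map isotopic to the identity has no point of period two. -/
lemma no_period_two (g : ℝ × ℝ → ℝ × ℝ) (hg : IsotopicToIdentity g) (hfp : ∀ x, g x ≠ x)
    (x : ℝ × ℝ) (hx : g (g x) = x) : False := by
  obtain ⟨H, Hc, H0, H1, He⟩ := hg
  have Hinj : ∀ t u v, H (t, u) = H (t, v) → u = v := by
    intro t u v huv
    obtain ⟨e, he⟩ := He t
    rw [he, he] at huv
    exact e.injective huv
  have hgc : Continuous g := by
    have : g = fun z => H (1, z) := by ext1 z; exact (H1 z).symm
    rw [this]; fun_prop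
  let K : ℝ × (ℝ × ℝ) → ℝ × ℝ := fun p =>
    H (projIcc 0 1 zero_le_one p.1, g p.2) - H (projIcc 0 1 zero_le_one p.1, p.2)
  have hpc : Continuous (projIcc (0:ℝ) 1 zero_le_one) := continuous_projIcc
  have hKc : Continuous K := by
    show Continuous (fun p : ℝ × (ℝ × ℝ) =>
      H (projIcc 0 1 zero_le_one p.1, g p.2) - H (projIcc 0 1 zero_le_one p.1, p.2))
    fun_prop
  have hK0 : ∀ p, K p ≠ 0 := by
    intro p hp
    exact hfp p.2 (Hinj _ _ _ (sub_eq_zero.1 hp))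
  let C : ℝ × (ℝ × ℝ) → ℂ := fun p => Complex.equivRealProdCLM.symm (K p)
  have hCc : Continuous C := Complex.equivRealProdCLM.symm.continuous.comp hKc
  have hC0 : ∀ p, C p ≠ 0 := by
    intro p hp
    exact hK0 p (by simpa [C] using hp)
  obtain ⟨L, ⟨-, hL⟩, -⟩ := Complex.isCoveringMap_exp.existsUnique_continuousMap_lifts
    (A := ℝ × (ℝ × ℝ))
    ⟨fun p => (⟨C p, hC0 p⟩ : {z : ℂ // z ≠ 0}), by fun_prop⟩ (0, x)
    (Complex.log (C (0, x))) (by simp [Complex.exp_log (hC0 _)])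
  have hL' : ∀ p, Complex.exp (L p) = C p := by
    intro p
    have := congrArg Subtype.val (congrFun hL p)
    exact this
  have p0 : projIcc (0:ℝ) 1 zero_le_one 0 = 0 := projIcc_left _
  have p1 : projIcc (0:ℝ) 1 zero_le_one 1 = 1 := projIcc_right _
  -- first relation
  have e1 : ∀ z, C (1, z) = C (0, g z) := by
    intro z
    simp only [C, K, p0, p1, H0, H1]
  have c1 := exp_lift_const (fun z => L (1, z) - L (0, g z)) (by fun_prop) 1 (by
    intro z
    rw [Complex.exp_sub, hL', hL', e1, div_self (hC0 _)]) x (g x)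
  have e2 : ∀ t, C (t, g x) = - C (t, x) := by
    intro t
    simp only [C, K, hx, ← map_neg, neg_sub]
  have e3 : ∀ t, Complex.exp (L (t, g x) - L (t, x)) = -1 := by
    intro t
    rw [Complex.exp_sub, hL', hL', e2, neg_div, div_self (hC0 _)]
  have c2 := exp_lift_const (fun t : ℝ => L (t, g x) - L (t, x)) (by fun_prop) (-1) e3 0 1
  simp only [hx] at c1 c2
  have d0 : L (0, g x) - L (0, x) = 0 := by linear_combination (1/2) * c2 - (1/2) * c1
  have := e3 0
  rw [d0] at this
  norm_num at this

lemma iso_comp {f g : ℝ × ℝ → ℝ × ℝ} (hf : IsotopicToIdentity f) (hg : IsotopicToIdentity g) :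
    IsotopicToIdentity (f ∘ g) := by
  obtain ⟨F, Fc, F0, F1, Fe⟩ := hf
  obtain ⟨G, Gc, G0, G1, Ge⟩ := hg
  refine ⟨fun p => F (p.1, G p), by fun_prop, by simp [F0, G0], by simp [F1, G1], fun t => ?_⟩
  obtain ⟨e, he⟩ := Fe t
  obtain ⟨e', he'⟩ := Ge t
  exact ⟨e'.trans e, fun z => by simp [he, he']⟩

/-- pushes inside `V` -/
def Push (V : Set (ℝ × ℝ)) (a b : ℝ × ℝ) : Prop :=
  ∃ φ : (ℝ × ℝ) ≃ₜ (ℝ × ℝ), IsotopicToIdentity φ ∧ (∀ z, z ∉ V → φ z = z) ∧ φ a = b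

lemma Push.trans {V : Set (ℝ × ℝ)} {a b c : ℝ × ℝ} (h : Push V a b) (h' : Push V b c) :
    Push V a c := by
  obtain ⟨φ, hφ, hV, e⟩ := h
  obtain ⟨ψ, hψ, hV', e'⟩ := h'
  exact ⟨φ.trans ψ, by have := iso_comp hψ hφ; exact this, fun z hz => by simp [hV z hz, hV' z hz], by simp [e, e']⟩

lemma push_ball {V : Set (ℝ × ℝ)} {a b : ℝ × ℝ} {r : ℝ} (hr : 0 < r)
    (hV : Metric.ball a r ⊆ V) (hb : b ∈ Metric.ball a r) : Push V a b := by
  let ρ : ℝ × ℝ → ℝ := fun z => max 0 (1 - dist z a / r)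
  have hρc : Continuous ρ := by fun_prop
  have hρL : ∀ u v, |ρ u - ρ v| ≤ dist u v / r := by
    intro u v
    have h1 : |ρ u - ρ v| ≤ |(1 - dist u a / r) - (1 - dist v a / r)| := by
      simpa [ρ] using abs_max_sub_max_le_abs (1 - dist u a / r) (1 - dist v a / r) 0 |> (by
        simpa [max_comm] using ·)
    have h2 : (1 - dist u a / r) - (1 - dist v a / r) = (dist v a - dist u a) / r := by ring
    rw [h2, abs_div, abs_of_pos hr] at h1
    refine h1.trans ?_
    gcongr
    rw [dist_comm u v]
    exact abs_dist_sub_le _ _ _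
  let c : NNReal := ⟨dist b a / r, by positivity⟩
  have hc : c < 1 := by
    rw [← NNReal.coe_lt_coe]
    show dist b a / r < 1
    rw [div_lt_one hr]; exact hb
  have key : ∀ t : unitInterval, ApproximatesLinearOn
      (fun z : ℝ × ℝ => z + ((t : ℝ) * ρ z) • (b - a))
      ((ContinuousLinearEquiv.refl ℝ (ℝ × ℝ) : (ℝ × ℝ) ≃L[ℝ] (ℝ × ℝ)) : (ℝ × ℝ) →L[ℝ] (ℝ × ℝ))
      univ c := by
    intro t u _ v _
    have : u + ((t : ℝ) * ρ u) • (b - a) - (v + ((t : ℝ) * ρ v) • (b - a)) - (u - v)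
      = ((t : ℝ) * (ρ u - ρ v)) • (b - a) := by module
    show ‖u + ((t : ℝ) * ρ u) • (b - a) - (v + ((t : ℝ) * ρ v) • (b - a)) - (u - v)‖
      ≤ dist b a / r * ‖u - v‖
    rw [this, norm_smul, ← dist_eq_norm, ← dist_eq_norm, norm_mul, Real.norm_eq_abs,
      Real.norm_eq_abs, abs_of_nonneg t.2.1]
    calc (t : ℝ) * |ρ u - ρ v| * dist b a ≤ 1 * (dist u v / r) * dist b a := by
          gcongr
          · exact t.2.2
          · exact hρL u v
      _ = dist b a / r * dist u v := by ring
  have hN : c < ‖((ContinuousLinearEquiv.refl ℝ (ℝ × ℝ)).symm : (ℝ × ℝ) →L[ℝ] (ℝ × ℝ))‖₊⁻¹ := by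
    have : ‖((ContinuousLinearEquiv.refl ℝ (ℝ × ℝ)).symm : (ℝ × ℝ) →L[ℝ] (ℝ × ℝ))‖₊ = 1 := by
      rw [← NNReal.coe_inj]
      exact ContinuousLinearMap.norm_id
    rw [this, inv_one]; exact hc
  refine ⟨(key 1).toHomeomorph _ (Or.inr hN), ⟨fun p => p.2 + ((p.1 : ℝ) * ρ p.2) • (b - a),
    by fun_prop, by simp, fun z => ?_, fun t => ⟨(key t).toHomeomorph _ (Or.inr hN), fun z => rfl⟩⟩,
    fun z hz => ?_, ?_⟩
  · rfl
  · show z + (((1 : unitInterval) : ℝ) * ρ z) • (b - a) = z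
    have : ρ z = 0 := by
      have h1 : r ≤ dist z a := by
        by_contra h
        exact hz (hV (not_le.1 h))
      simp only [ρ]
      apply max_eq_left
      rw [sub_nonpos, le_div_iff₀ hr]; linarith
    simp [this]
  · show a + (((1 : unitInterval) : ℝ) * ρ a) • (b - a) = b
    simp [ρ]

lemma push_connected {V : Set (ℝ × ℝ)} (hV : IsOpen V) (hc : IsPreconnected V) {a b : ℝ × ℝ}
    (ha : a ∈ V) (hb : b ∈ V) : Push V a b := by
  by_contra hab
  have hab' : (V ∩ ({z | z ∈ V ∧ Push V a z} ∩ {z | z ∈ V ∧ ¬ Push V a z})).Nonempty := by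
    apply hc
    · rw [Metric.isOpen_iff]
      rintro z ⟨hz, hp⟩
      obtain ⟨r, hr, hrV⟩ := Metric.isOpen_iff.1 hV z hz
      exact ⟨r, hr, fun w hw => ⟨hrV hw, hp.trans (push_ball hr hrV hw)⟩⟩
    · rw [Metric.isOpen_iff]
      rintro z ⟨hz, hp⟩
      obtain ⟨r, hr, hrV⟩ := Metric.isOpen_iff.1 hV z hz
      refine ⟨r / 2, by positivity, fun w hw => ⟨hrV (Metric.ball_subset_ball (by linarith) hw),
        fun h => hp (h.trans (push_ball (r := r / 2) (by positivity) ?_ ?_))⟩⟩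
      · refine (Metric.ball_subset_ball' ?_).trans hrV
        have : dist w z < r / 2 := hw
        linarith
      · rw [Metric.mem_ball, dist_comm]; exact hw
    · intro z hz
      by_cases h : Push V a z
      · exact Or.inl ⟨hz, h⟩
      · exact Or.inr ⟨hz, h⟩
    · obtain ⟨r, hr, hrV⟩ := Metric.isOpen_iff.1 hV a ha
      exact ⟨a, ha, ha, push_ball hr hrV (Metric.mem_ball_self hr)⟩
    · exact ⟨b, hb, hb, hab⟩
  obtain ⟨z, -, h1, h2⟩ := hab'
  exact h2.2 h1.2

/-- a family of pairwise disjoint free open connected sets -/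
def Good (g : ℝ × ℝ → ℝ × ℝ) (𝒱 : Set (Set (ℝ × ℝ))) : Prop :=
  (∀ V ∈ 𝒱, IsOpen V ∧ IsPreconnected V ∧ ∀ v ∈ V, g v ∉ V) ∧
    ∀ V ∈ 𝒱, ∀ W ∈ 𝒱, ∀ z, z ∈ V → z ∈ W → V = W

def Sim (𝒱 : Set (Set (ℝ × ℝ))) (u v : ℝ × ℝ) : Prop := u = v ∨ ∃ V ∈ 𝒱, u ∈ V ∧ v ∈ V

lemma Sim.symm {𝒱 : Set (Set (ℝ × ℝ))} {u v : ℝ × ℝ} (h : Sim 𝒱 u v) : Sim 𝒱 v u := by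
  rcases h with h | ⟨V, hV, h, h'⟩
  · exact Or.inl h.symm
  · exact Or.inr ⟨V, hV, h', h⟩

lemma Sim.trans {g : ℝ × ℝ → ℝ × ℝ} {𝒱 : Set (Set (ℝ × ℝ))} (hG : Good g 𝒱) {u v w : ℝ × ℝ}
    (h : Sim 𝒱 u v) (h' : Sim 𝒱 v w) : Sim 𝒱 u w := by
  rcases h with rfl | ⟨V, hV, h1, h2⟩
  · exact h'
  rcases h' with rfl | ⟨W, hW, h3, h4⟩
  · exact Or.inr ⟨V, hV, h1, h2⟩
  · obtain rfl := hG.2 V hV W hW v h2 h3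
    exact Or.inr ⟨V, hV, h1, h4⟩

def NoChain (N : ℕ) : Prop :=
  ∀ (g : (ℝ × ℝ) ≃ₜ (ℝ × ℝ)), IsBrouwer g → ∀ 𝒱, Good g 𝒱 → ∀ y : ℕ → ℝ × ℝ,
    (∀ j < N, Sim 𝒱 (g (y j)) (y (j + 1))) → Sim 𝒱 (y N) (y 0) → False

/-- closing a pseudo-orbit -/
lemma closing (g : (ℝ × ℝ) ≃ₜ (ℝ × ℝ)) (hg : IsBrouwer g) (𝒱 : Set (Set (ℝ × ℝ)))
    (hG : Good g 𝒱) (y : ℕ → ℝ × ℝ) (N : ℕ)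
    (hy : ∀ j < N, Sim 𝒱 (g (y j)) (y (j + 1)))
    (hd : ∀ i j, i < j → j < N → ¬ Sim 𝒱 (y (i + 1)) (y (j + 1))) (m : ℕ) (hm : m ≤ N) :
    ∃ g' : (ℝ × ℝ) ≃ₜ (ℝ × ℝ), IsBrouwer g' ∧ Good g' 𝒱 ∧
      (∀ j < N, Sim 𝒱 (g' (y j)) (y (j + 1))) ∧ ∀ j < m, g' (y j) = y (j + 1) := by
  induction m with
  | zero => exact ⟨g, hg, hG, hy, by simp⟩
  | succ m ih =>
    obtain ⟨g, hg, hG, hy, he⟩ := ih (by omega)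
    rcases hy m (by omega) with h | ⟨V, hV, h1, h2⟩
    · refine ⟨g, hg, hG, hy, fun j hj => ?_⟩
      rcases Nat.lt_succ_iff_lt_or_eq.1 hj with h' | rfl
      · exact he j h'
      · exact h
    obtain ⟨hVo, hVc, hVf⟩ := hG.1 V hV
    obtain ⟨φ, hφ, hφV, hφe⟩ := push_connected hVo hVc h1 h2
    have hφV' : ∀ z, φ z ∈ V ↔ z ∈ V := by
      intro z
      constructor
      · intro h
        by_contra hz
        rw [hφV z hz] at h
        exact hz h
      · intro h
        by_contra hz
        have := φ.injective (hφV _ hz)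
        rw [this] at hz
        exact hz h
    have hφs : ∀ z, Sim 𝒱 (φ z) z := by
      intro z
      by_cases hz : z ∈ V
      · exact Or.inr ⟨V, hV, (hφV' z).2 hz, hz⟩
      · exact Or.inl (hφV z hz)
    refine ⟨g.trans φ, ⟨by have := iso_comp hφ hg.1; exact this, ?_⟩, ⟨fun W hW => ?_, hG.2⟩,
      fun j hj => ?_, fun j hj => ?_⟩
    · intro x hx
      simp only [Homeomorph.trans_apply] at hx
      by_cases hz : g x ∈ V
      · have : x ∈ V := by rw [← hx]; exact (hφV' _).2 hz
        exact hVf x this hz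
      · rw [hφV _ hz] at hx
        exact hg.2 x hx
    · refine ⟨(hG.1 W hW).1, (hG.1 W hW).2.1, fun v hv hv' => ?_⟩
      simp only [Homeomorph.trans_apply] at hv'
      by_cases hz : g v ∈ V
      · obtain rfl := hG.2 V hV W hW _ ((hφV' _).2 hz) hv'
        exact hVf v hv hz
      · rw [hφV _ hz] at hv'
        exact (hG.1 W hW).2.2 v hv hv'
    · exact (hφs _).trans hG (hy j hj)
    · simp only [Homeomorph.trans_apply]
      rcases Nat.lt_succ_iff_lt_or_eq.1 hj with h' | rfl
      · rw [he j h']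
        apply hφV
        intro h3
        exact hd j m h' (by omega) (Or.inr ⟨V, hV, h3, h2⟩)
      · exact hφe

lemma thick (g : (ℝ × ℝ) ≃ₜ (ℝ × ℝ)) (K U : Set (ℝ × ℝ)) (hK : IsCompact K)
    (hKc : IsPreconnected K) (hU : IsOpen U) (hKU : K ⊆ U) (hf : ∀ v ∈ K, g v ∉ K) :
    ∃ V, IsOpen V ∧ IsPreconnected V ∧ (∀ v ∈ V, g v ∉ V) ∧ K ⊆ V ∧ V ⊆ U := by
  rcases K.eq_empty_or_nonempty with rfl | ⟨x, hx⟩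
  · exact ⟨∅, isOpen_empty, isPreconnected_empty, by simp, by simp, by simp⟩
  obtain ⟨A, B, hA, hB, hKA, hKB, hAB⟩ := SeparatedNhds.of_isCompact_isCompact hK
    (hK.image g.continuous) (by
      rw [Set.disjoint_left]
      rintro _ h ⟨v, hv, rfl⟩
      exact hf v hv h)
  have hKW : K ⊆ U ∩ A ∩ g ⁻¹' B := fun z hz => ⟨⟨hKU hz, hKA hz⟩, hKB ⟨z, hz, rfl⟩⟩
  have hsub := connectedComponentIn_subset (U ∩ A ∩ g ⁻¹' B) x
  refine ⟨connectedComponentIn (U ∩ A ∩ g ⁻¹' B) x,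
    ((hU.inter hA).inter (hB.preimage g.continuous)).connectedComponentIn,
    isPreconnected_connectedComponentIn, fun v hv hv' => ?_,
    hKc.subset_connectedComponentIn hx hKW, fun z hz => (hsub hz).1.1⟩
  exact Set.disjoint_left.1 hAB (hsub hv').1.2 (hsub hv).2

/-- one free compact connected set -/
lemma no_return {k : ℕ} (hN : NoChain k) (g : (ℝ × ℝ) ≃ₜ (ℝ × ℝ)) (hg : IsBrouwer g)
    (K : Set (ℝ × ℝ)) (hK : IsCompact K) (hKc : IsPreconnected K) (hf : ∀ v ∈ K, g v ∉ K)
    (v : ℝ × ℝ) (hv : v ∈ K) : g^[k] v ∉ K := by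
  intro hv'
  obtain ⟨V, h1, h2, h3, h4, -⟩ := thick g K univ hK hKc isOpen_univ (by simp) hf
  refine hN g hg {V} ⟨by simp [h1, h2]; simpa using h3, by simp⟩ (fun j => g^[j] v)
    (fun j _ => Or.inl (Function.iterate_succ_apply' _ _ _).symm) (Or.inr ⟨V, rfl, h4 hv', h4 hv⟩)

lemma two_sets {N : ℕ} (hN : NoChain (N + 2)) (g : (ℝ × ℝ) ≃ₜ (ℝ × ℝ)) (hg : IsBrouwer g)
    (x : ℝ × ℝ) (hx : g^[N + 3] x = x)
    (K L : Set (ℝ × ℝ)) (hK : IsCompact K) (hKc : IsPreconnected K) (hKf : ∀ v ∈ K, g v ∉ K)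
    (hL : IsCompact L) (hLc : IsPreconnected L) (hLf : ∀ v ∈ L, g v ∉ L)
    (hKL : ∀ v ∈ L, g v ∉ K) (q : ℝ × ℝ) (hxK : x ∈ K) (hqK : q ∈ K) (hqL : q ∈ L)
    (hxL : g x ∈ L) : False := by
  obtain ⟨A, B, hA, hB, hKA, hLB, hAB⟩ := SeparatedNhds.of_isCompact_isCompact hK
    (hL.image g.continuous) (by
      rw [Set.disjoint_left]
      rintro _ h ⟨v, hv, rfl⟩
      exact hKL v hv h)
  obtain ⟨V, v1, v2, v3, v4, v5⟩ := thick g K A hK hKc hA hKA hKf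
  obtain ⟨W, w1, w2, w3, w4, w5⟩ := thick g (g '' L) B (hL.image g.continuous)
    (hLc.image g g.continuous.continuousOn) hB hLB (by
      rintro _ ⟨v, hv, rfl⟩ ⟨w, hw, h⟩
      obtain rfl := g.injective h
      exact hLf v hv hw)
  have hVW : ∀ z, z ∈ V → z ∉ W := fun z hz hz' => Set.disjoint_left.1 hAB (v5 hz) (w5 hz')
  refine hN g hg {V, W} ⟨?_, ?_⟩ (fun j => if j = 0 then q else g^[j + 1] x) ?_ ?_
  · rintro U (rfl | rfl)
    · exact ⟨v1, v2, v3⟩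
    · exact ⟨w1, w2, w3⟩
  · rintro U (rfl | rfl) U' (rfl | rfl) z hz hz'
    · rfl
    · exact absurd hz' (hVW z hz)
    · exact absurd hz (hVW z hz')
    · rfl
  · intro j _
    rcases j with _ | j
    · right
      refine ⟨W, by simp, ?_, ?_⟩
      · exact w4 ⟨q, hqL, by simp⟩
      · exact w4 ⟨g x, hxL, by simp⟩
    · left
      simp only [Nat.succ_ne_zero, if_false, Nat.add_eq_zero_iff, one_ne_zero, and_false]
      exact (Function.iterate_succ_apply' _ _ _).symm
  · right
    refine ⟨V, by simp, ?_, ?_⟩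
    · simp only [Nat.add_eq_zero_iff, two_ne_zero, and_false, if_false]
      rw [hx]; exact v4 hxK
    · simpa using v4 hqK

lemma no_periodic {N : ℕ} (hN : NoChain (N + 2)) (hN2 : NoChain 2)
    (g : (ℝ × ℝ) ≃ₜ (ℝ × ℝ)) (hg : IsBrouwer g)
    (x : ℝ × ℝ) (hx : g^[N + 3] x = x) : False := by
  let γ : ℝ → ℝ × ℝ := fun s => x + s • (g x - x)
  have hγc : Continuous γ := by fun_prop
  have hγ0 : γ 0 = x := by simp [γ]
  have hγ1 : γ 1 = g x := by simp [γ]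
  have hγi : ∀ s t, γ s = γ t → s = t := by
    intro s t h
    have h1 : (s - t) • (g x - x) = 0 := by
      have : s • (g x - x) = t • (g x - x) := add_left_cancel h
      rw [sub_smul, this, sub_self]
    rcases smul_eq_zero.1 h1 with h2 | h2
    · linarith
    · exact absurd (sub_eq_zero.1 h2) (hg.2 x)
  have hQ : IsCompact {p : ℝ × ℝ | p ∈ Icc (0:ℝ) 1 ×ˢ Icc (0:ℝ) 1 ∧ g (γ p.1) = γ p.2} := by
    apply (isCompact_Icc.prod isCompact_Icc).inter_right
    exact isClosed_eq (g.continuous.comp (hγc.comp continuous_fst)) (hγc.comp continuous_snd)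
  obtain ⟨⟨a, b⟩, ⟨⟨ha, hb⟩, hab⟩, hmin⟩ := hQ.exists_isMinOn
    ⟨((0:ℝ), (1:ℝ)), by simp, by simp [hγ0, hγ1]⟩
    (f := fun p : ℝ × ℝ => max p.1 p.2) (by fun_prop)
  simp only at ha hb hab
  have hmin' : ∀ s ∈ Icc (0:ℝ) 1, ∀ t ∈ Icc (0:ℝ) 1, g (γ s) = γ t → max a b ≤ max s t :=
    fun s hs t ht h => hmin (a := (s, t)) ⟨⟨hs, ht⟩, h⟩
  let S : ℝ → Set (ℝ × ℝ) := fun t => γ '' Icc 0 t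
  have hSm : ∀ s t, s ≤ t → S s ⊆ S t := fun s t h => image_mono (Icc_subset_Icc_right h)
  have hSk : ∀ t, IsCompact (S t) := fun t => isCompact_Icc.image hγc
  have hSc : ∀ t, IsPreconnected (S t) := fun t => isPreconnected_Icc.image _ hγc.continuousOn
  have hSs : ∀ s, 0 ≤ s → ∀ t, s ≤ t → γ s ∈ S t := fun s h t h' => ⟨s, ⟨h, h'⟩, rfl⟩
  have hT1 : max a b ≤ 1 := max_le ha.2 hb.2
  have hfree : ∀ t, t < max a b → ∀ v ∈ S t, g v ∉ S t := by
    rintro t ht _ ⟨s, hs, rfl⟩ ⟨s', hs', h⟩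
    have := hmin' s ⟨hs.1, by linarith [hs.2]⟩ s' ⟨hs'.1, by linarith [hs'.2]⟩ h.symm
    have h2 := max_le hs.2 hs'.2
    linarith
  have hret : ∀ t, t < max a b → ∀ v ∈ S t, g (g v) ∉ S t := fun t ht v hv =>
    no_return hN2 g hg (S t) (hSk t) (hSc t) (hfree t ht) v hv
  have hab' : a ≠ b := by
    rintro rfl
    exact hg.2 _ hab
  have hcf : ∀ v ∈ ({γ b} : Set (ℝ × ℝ)), g v ∉ ({γ b} : Set (ℝ × ℝ)) := by
    rintro _ rfl
    exact hg.2 _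
  have hggc : Continuous (fun z => g (g z)) := g.continuous.comp g.continuous
  rcases lt_or_gt_of_ne hab' with h | h
  · have hT : max a b = b := max_eq_right h.le
    rw [hT] at hfree hret
    have c1 : γ b ∉ S a := by
      rintro ⟨s, hs, h'⟩
      have := hγi _ _ h'
      linarith [hs.2]
    have c2 : γ b ∉ (fun z => g (g z)) '' S a := by
      rintro ⟨v, hv, h'⟩
      rw [← hab] at h'
      have := g.injective h'
      exact hfree a h v hv (this ▸ hSs a ha.1 a le_rfl)
    have c3 : γ b ∉ g ⁻¹' S b := by
      rintro ⟨s, hs, h'⟩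
      rcases hs.2.eq_or_lt with rfl | hsb
      · exact hg.2 _ h'.symm
      · refine hret (max s a) (max_lt hsb h) (γ a) (hSs a ha.1 _ (le_max_right _ _)) ?_
        rw [hab, ← h']
        exact hSs s hs.1 _ (le_max_left _ _)
    obtain ⟨V, v1, -, v3, v4, v5⟩ := thick g {γ b}
      ((S a)ᶜ ∩ ((fun z => g (g z)) '' S a)ᶜ ∩ (g ⁻¹' S b)ᶜ) isCompact_singleton
      isPreconnected_singleton
      (((hSk a).isClosed.isOpen_compl.inter ((hSk a).image hggc).isClosed.isOpen_compl).inter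
        ((hSk b).isClosed.preimage g.continuous).isOpen_compl)
      (by rintro _ rfl; exact ⟨⟨c1, c2⟩, c3⟩) hcf
    obtain ⟨ρ, hρ, hB⟩ := Metric.nhds_basis_closedBall.mem_iff.1 (v1.mem_nhds (v4 rfl))
    obtain ⟨s, hs, hsB⟩ : ∃ s, s ∈ Ico a b ∧ γ s ∈ Metric.closedBall (γ b) ρ := by
      have e1 : ∀ᶠ s in 𝓝[<] b, γ s ∈ Metric.closedBall (γ b) ρ :=
        (hγc.continuousAt.eventually (Metric.closedBall_mem_nhds _ hρ)).filter_mono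
          nhdsWithin_le_nhds
      have e2 : ∀ᶠ s in 𝓝[<] b, s ∈ Ico a b := Ico_mem_nhdsLT h
      obtain ⟨s, h1, h2⟩ := (e2.and e1).exists
      exact ⟨s, h1, h2⟩
    refine two_sets hN g hg x hx (S s) (Metric.closedBall (γ b) ρ ∪ g '' S a)
      (hSk s) (hSc s) (hfree s hs.2) ((isCompact_closedBall _ _).union
        ((hSk a).image g.continuous)) ?_ ?_ ?_ (γ s) ?_ ?_ (Or.inl hsB) (Or.inr ⟨x, ?_, rfl⟩)
    · refine IsPreconnected.union (γ b) (Metric.mem_closedBall_self hρ.le)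
        ⟨γ a, hSs a ha.1 a le_rfl, hab⟩ (convex_closedBall _ _).isPreconnected
        ((hSc a).image g g.continuous.continuousOn)
    · rintro v (hv | ⟨v, hv, rfl⟩) (hv' | ⟨w, hw, h'⟩)
      · exact v3 v (hB hv) (hB hv')
      · exact (v5 (hB hv)).1.1 (g.injective h' ▸ hw)
      · exact (v5 (hB hv')).1.2 ⟨v, hv, rfl⟩
      · exact hfree a h v hv (g.injective h' ▸ hw)
    · rintro v (hv | ⟨v, hv, rfl⟩) hv'
      · exact (v5 (hB hv)).2 (hSm s b hs.2.le hv')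
      · exact hret s hs.2 v (hSm a s hs.1 hv) hv'
    · rw [← hγ0]; exact hSs 0 le_rfl s (ha.1.trans hs.1)
    · exact hSs s (ha.1.trans hs.1) s le_rfl
    · rw [← hγ0]; exact hSs 0 le_rfl a ha.1
  · have hT : max a b = a := max_eq_left h.le
    rw [hT] at hfree hret
    have c1 : γ b ∉ g '' S b := by
      rintro ⟨_, ⟨s, hs, rfl⟩, h'⟩
      rw [← hab] at h'
      have := hγi _ _ (g.injective h')
      linarith [hs.2]
    have c2 : γ b ∉ (fun z => g (g z)) '' S a := by
      rintro ⟨_, ⟨s, hs, rfl⟩, h'⟩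
      rcases hs.2.eq_or_lt with rfl | hsb
      · rw [← hab] at h'
        exact hg.2 _ (g.injective h')
      · refine hret (max s b) (max_lt hsb h) (γ s) (hSs s hs.1 _ (le_max_left _ _)) ?_
        simp only at h'
        rw [h']
        exact hSs b hb.1 _ (le_max_right _ _)
    have c3 : γ b ∉ g ⁻¹' S b := hfree b h _ (hSs b hb.1 b le_rfl)
    obtain ⟨V, v1, -, v3, v4, v5⟩ := thick g {γ b}
      ((g '' S b)ᶜ ∩ ((fun z => g (g z)) '' S a)ᶜ ∩ (g ⁻¹' S b)ᶜ) isCompact_singleton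
      isPreconnected_singleton
      ((((hSk b).image g.continuous).isClosed.isOpen_compl.inter
        ((hSk a).image hggc).isClosed.isOpen_compl).inter
        ((hSk b).isClosed.preimage g.continuous).isOpen_compl)
      (by rintro _ rfl; exact ⟨⟨c1, c2⟩, c3⟩) hcf
    obtain ⟨ρ, hρ, hB⟩ := Metric.nhds_basis_closedBall.mem_iff.1 (v1.mem_nhds (v4 rfl))
    obtain ⟨s, hs, hsB⟩ : ∃ s, s ∈ Ico b a ∧ g (γ s) ∈ Metric.closedBall (γ b) ρ := by
      have e1 : ∀ᶠ s in 𝓝[<] a, g (γ s) ∈ Metric.closedBall (γ b) ρ := by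
        refine ((g.continuous.comp hγc).continuousAt.eventually ?_).filter_mono
          nhdsWithin_le_nhds
        simp only [Function.comp, hab]
        exact Metric.closedBall_mem_nhds _ hρ
      have e2 : ∀ᶠ s in 𝓝[<] a, s ∈ Ico b a := Ico_mem_nhdsLT h
      obtain ⟨s, h1, h2⟩ := (e2.and e1).exists
      exact ⟨s, h1, h2⟩
    refine two_sets hN g hg x hx (S b ∪ Metric.closedBall (γ b) ρ) (g '' S s)
      ((hSk b).union (isCompact_closedBall _ _)) ?_ ?_ ((hSk s).image g.continuous)
      ((hSc s).image g g.continuous.continuousOn) ?_ ?_ (g (γ s)) (Or.inl ?_) (Or.inr hsB)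
      ⟨γ s, ?_, rfl⟩ ⟨x, ?_, rfl⟩
    · exact IsPreconnected.union (γ b) (hSs b hb.1 b le_rfl) (Metric.mem_closedBall_self hρ.le)
        (hSc b) (convex_closedBall _ _).isPreconnected
    · rintro v (hv | hv) (hv' | hv')
      · exact hfree b h v hv hv'
      · exact (v5 (hB hv')).1.1 ⟨v, hv, rfl⟩
      · exact (v5 (hB hv)).2 hv'
      · exact v3 v (hB hv) (hB hv')
    · rintro _ ⟨v, hv, rfl⟩ ⟨w, hw, h'⟩
      exact hfree s hs.2 v hv (g.injective h' ▸ hw)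
    · rintro _ ⟨v, hv, rfl⟩ (hv' | hv')
      · exact hret s hs.2 v hv (hSm b s hs.1 hv')
      · exact (v5 (hB hv')).1.2 ⟨v, hSm s a hs.2.le hv, rfl⟩
    · rw [← hγ0]; exact hSs 0 le_rfl b hb.1
    · exact hSs s (hb.1.trans hs.1) s le_rfl
    · rw [← hγ0]; exact hSs 0 le_rfl s (hb.1.trans hs.1)

theorem noChain (N : ℕ) : NoChain (N + 1) := by
  induction N using Nat.strong_induction_on with
  | _ N ih =>
  intro g hg 𝒱 hG y hy hc
  -- close up exactly
  let y' : ℕ → ℝ × ℝ := fun j => if j = N + 1 then y 0 else y j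
  have hyy : ∀ j, Sim 𝒱 (y j) (y' j) := by
    intro j
    by_cases h : j = N + 1
    · subst h; simpa [y'] using hc
    · left; simp [y', h]
  have hy1 : ∀ j < N + 1, y' j = y j := by
    intro j hj
    have : j ≠ N + 1 := by omega
    simp [y', this]
  have hy' : ∀ j < N + 1, Sim 𝒱 (g (y' j)) (y' (j + 1)) := by
    intro j hj
    rw [hy1 j hj]
    exact (hy j hj).trans hG (hyy _)
  have hend : y' (N + 1) = y' 0 := by simp [y']
  have hd : ∀ i j, i < j → j < N + 1 → ¬ Sim 𝒱 (y' (i + 1)) (y' (j + 1)) := by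
    intro i j hij hj hs
    obtain ⟨k, rfl⟩ := Nat.exists_eq_add_of_lt hij
    refine ih k (by omega) g hg 𝒱 hG (fun l => y' (i + 1 + l)) (fun l hl => ?_) ?_
    · exact hy' (i + 1 + l) (by omega)
    · have : i + 1 + (k + 1) = i + k + 1 + 1 := by ring
      simp only [this, add_zero]
      exact hs.symm
  obtain ⟨g', hg', hG', -, he⟩ := closing g hg 𝒱 hG y' (N + 1) hy' hd (N + 1) le_rfl
  have hit : ∀ j ≤ N + 1, g'^[j] (y' 0) = y' j := by
    intro j
    induction j with
    | zero => simp
    | succ j ihj =>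
      intro hj
      rw [Function.iterate_succ_apply', ihj (by omega), he j (by omega)]
  have hper := (hit (N + 1) le_rfl).trans hend
  match N, ih, hper with
  | 0, _, hper => exact hg'.2 _ hper
  | 1, _, hper => exact no_period_two g' hg'.1 hg'.2 _ hper
  | n + 2, ih, hper =>
    exact no_periodic (N := n) (ih (n + 1) (by omega)) (ih 1 (by omega)) g' hg' _ hper

lemma chain_of_transGen {g : ℝ × ℝ → ℝ × ℝ} {𝒱 : Set (Set (ℝ × ℝ))} {u v : ℝ × ℝ}
    (h : Relation.TransGen (fun a b => Sim 𝒱 (g a) b) u v) :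
    ∃ (N : ℕ) (y : ℕ → ℝ × ℝ), y 0 = u ∧ y (N + 1) = v ∧
      ∀ j < N + 1, Sim 𝒱 (g (y j)) (y (j + 1)) := by
  induction h with
  | single h =>
    rename_i b
    refine ⟨0, fun j => if j = 0 then u else b, by simp, by simp, fun j hj => ?_⟩
    obtain rfl : j = 0 := by omega
    simpa using h
  | tail _ h ih =>
    rename_i b c _
    obtain ⟨N, y, h0, h1, h2⟩ := ih
    refine ⟨N + 1, fun j => if j = N + 2 then c else y j, by simp [h0], by simp, fun j hj => ?_⟩
    have hj' : j ≠ N + 2 := by omega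
    rcases Nat.lt_succ_iff_lt_or_eq.1 hj with h' | rfl
    · have : j + 1 ≠ N + 2 := by omega
      simp only [hj', this, if_false]
      exact h2 j h'
    · simpa [h1] using h

lemma no_loop {g : (ℝ × ℝ) ≃ₜ (ℝ × ℝ)} (hg : IsBrouwer g) {𝒱 : Set (Set (ℝ × ℝ))}
    (hG : Good g 𝒱) {u : ℝ × ℝ} (h : Relation.TransGen (fun a b => Sim 𝒱 (g a) b) u u) :
    False := by
  obtain ⟨N, y, h0, h1, h2⟩ := chain_of_transGen h
  exact noChain N g hg 𝒱 hG y h2 (Or.inl (h1.trans h0.symm))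

lemma transGen_pow {g : (ℝ × ℝ) ≃ₜ (ℝ × ℝ)} {𝒱 : Set (Set (ℝ × ℝ))} (u w : ℝ × ℝ) (n : ℕ)
    (h : Sim 𝒱 ((g.toEquiv ^ (n + 1)) u) w) :
    Relation.TransGen (fun a b => Sim 𝒱 (g a) b) u w := by
  induction n generalizing w with
  | zero => exact .single (by simpa using h)
  | succ n ih =>
    refine (ih _ (Or.inl rfl)).tail ?_
    rw [pow_succ'] at h
    exact h

lemma transGen_zpow {g : (ℝ × ℝ) ≃ₜ (ℝ × ℝ)} {𝒱 : Set (Set (ℝ × ℝ))} (u w : ℝ × ℝ) (k : ℤ)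
    (hk : 0 < k) (h : Sim 𝒱 ((g.toEquiv ^ k) u) w) :
    Relation.TransGen (fun a b => Sim 𝒱 (g a) b) u w := by
  obtain ⟨n, rfl⟩ : ∃ n : ℕ, k = ((n + 1 : ℕ) : ℤ) := ⟨(k - 1).toNat, by omega⟩
  rw [zpow_natCast] at h
  exact transGen_pow u w n h

lemma cont_zpow (g : (ℝ × ℝ) ≃ₜ (ℝ × ℝ)) (k : ℤ) : Continuous (g.toEquiv ^ k) := by
  have key : ∀ (h : (ℝ × ℝ) ≃ₜ (ℝ × ℝ)) (n : ℕ), Continuous (h.toEquiv ^ n) := by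
    intro h n
    rw [← Equiv.Perm.iterate_eq_pow]
    exact h.continuous.iterate n
  rcases Int.eq_nat_or_neg k with ⟨n, rfl | rfl⟩
  · rw [zpow_natCast]; exact key g n
  · rw [zpow_neg, zpow_natCast, ← inv_pow]; exact key g.symm n

lemma no_zreturn {g : (ℝ × ℝ) ≃ₜ (ℝ × ℝ)} (hg : IsBrouwer g) {D : Set (ℝ × ℝ)}
    (hD : IsOpen D) (hDc : IsPreconnected D) (hf : ∀ v ∈ D, g v ∉ D) (k : ℤ) (hk : k ≠ 0)
    (u : ℝ × ℝ) (hu : u ∈ D) : (g.toEquiv ^ k) u ∉ D := by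
  have hG : Good g {D} := by
    refine ⟨?_, ?_⟩
    · rintro _ rfl; exact ⟨hD, hDc, hf⟩
    · rintro _ rfl _ rfl _ _ _; rfl
  intro h
  rcases lt_or_gt_of_ne hk with hk | hk
  · refine no_loop hg hG (u := (g.toEquiv ^ k) u) (transGen_zpow _ _ (-k) (by omega) ?_)
    right
    refine ⟨D, rfl, ?_, h⟩
    rw [← Equiv.Perm.mul_apply, ← zpow_add]
    simpa using hu
  · exact no_loop hg hG (transGen_zpow u u k hk (Or.inr ⟨D, rfl, h, hu⟩))

end Brouwer

/-- Le Roux's return-time lemma: if `g₁`, `g₂` are commuting Brouwer homeomorphisms and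
`D` is a nonempty open disk disjoint from its images under `g₁` and `g₂`, then the
return-time set `R = {(n₁, n₂) : g₁^{n₁} g₂^{n₂} (D) ∩ D ≠ ∅}`, away from `(0, 0)`,
is contained either in `{n₁ n₂ > 0}` or in `{n₁ n₂ < 0}`. -/
theorem return_time_set_dichotomy
    (g₁ g₂ : (ℝ × ℝ) ≃ₜ (ℝ × ℝ)) (h₁ : IsBrouwer g₁) (h₂ : IsBrouwer g₂)
    (hcomm : ∀ z : ℝ × ℝ, g₁ (g₂ z) = g₂ (g₁ z))
    (c : ℝ × ℝ) (r : ℝ) (hr : 0 < r)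
    (hD₁ : Metric.ball c r ∩ (g₁ '' Metric.ball c r) = ∅)
    (hD₂ : Metric.ball c r ∩ (g₂ '' Metric.ball c r) = ∅) :
    ({n : ℤ × ℤ | (⇑(g₁.toEquiv ^ n.1) '' (⇑(g₂.toEquiv ^ n.2) '' Metric.ball c r)
        ∩ Metric.ball c r).Nonempty} \ {((0 : ℤ), (0 : ℤ))}
        ⊆ {n : ℤ × ℤ | 0 < n.1 * n.2}) ∨
    ({n : ℤ × ℤ | (⇑(g₁.toEquiv ^ n.1) '' (⇑(g₂.toEquiv ^ n.2) '' Metric.ball c r)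
        ∩ Metric.ball c r).Nonempty} \ {((0 : ℤ), (0 : ℤ))}
        ⊆ {n : ℤ × ℤ | n.1 * n.2 < 0}) := by
  have hDo : IsOpen (Metric.ball c r) := Metric.isOpen_ball
  have hDc : IsPreconnected (Metric.ball c r) := (convex_ball c r).isPreconnected
  have hf₁ : ∀ v ∈ Metric.ball c r, g₁ v ∉ Metric.ball c r := fun v hv hv' =>
    (Set.eq_empty_iff_forall_notMem.1 hD₁) _ ⟨hv', v, hv, rfl⟩
  have hf₂ : ∀ v ∈ Metric.ball c r, g₂ v ∉ Metric.ball c r := fun v hv hv' =>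
    (Set.eq_empty_iff_forall_notMem.1 hD₂) _ ⟨hv', v, hv, rfl⟩
  generalize Metric.ball c r = D at *
  have z₁ := no_zreturn h₁ hDo hDc hf₁
  have z₂ := no_zreturn h₂ hDo hDc hf₂
  have hfree₂ : ∀ k : ℤ, ∀ u ∈ D, (g₂.toEquiv ^ k) u ∈ D → k = 0 := by
    intro k u hu h
    by_contra hk
    exact z₂ k hk u hu h
  have hco : Commute g₁.toEquiv g₂.toEquiv := by
    ext1 z
    exact hcomm z
  have hco' : ∀ (a b : ℤ) (z : ℝ × ℝ), (g₁.toEquiv ^ a) ((g₂.toEquiv ^ b) z)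
      = (g₂.toEquiv ^ b) ((g₁.toEquiv ^ a) z) := by
    intro a b z
    rw [← Equiv.Perm.mul_apply, (hco.zpow_zpow a b).eq, Equiv.Perm.mul_apply]
  have hadd : ∀ (e : Equiv.Perm (ℝ × ℝ)) (a b : ℤ) (z : ℝ × ℝ),
      (e ^ a) ((e ^ b) z) = (e ^ (a + b)) z := by
    intro e a b z
    rw [zpow_add, Equiv.Perm.mul_apply]
  let V : ℤ → Set (ℝ × ℝ) := fun k => {z | (g₂.toEquiv ^ (-k)) z ∈ D}
  have hVm : ∀ k u, u ∈ D → (g₂.toEquiv ^ k) u ∈ V k := by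
    intro k u hu
    show (g₂.toEquiv ^ (-k)) ((g₂.toEquiv ^ k) u) ∈ D
    rw [hadd]; simpa using hu
  have hVi : ∀ k, V k = (g₂.toEquiv ^ k) '' D := by
    intro k
    ext z
    constructor
    · intro hz
      exact ⟨_, hz, by rw [hadd]; simp⟩
    · rintro ⟨u, hu, rfl⟩
      exact hVm k u hu
  let W : Set (Set (ℝ × ℝ)) := Set.range V
  have hG : Good g₁ W := by
    refine ⟨?_, ?_⟩
    · rintro _ ⟨k, rfl⟩
      refine ⟨hDo.preimage (cont_zpow g₂ (-k)), ?_, ?_⟩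
      · rw [hVi]; exact hDc.image _ (cont_zpow g₂ k).continuousOn
      · intro v hv hv'
        refine hf₁ _ hv ?_
        have := hco' 1 (-k) v
        simp only [zpow_one] at this
        change g₁ ((g₂.toEquiv ^ (-k)) v) = (g₂.toEquiv ^ (-k)) (g₁ v) at this
        rw [this]; exact hv'
    · rintro _ ⟨i, rfl⟩ _ ⟨j, rfl⟩ z hz hz'
      have : j - i = 0 := by
        refine hfree₂ _ _ hz' ?_
        rw [hadd]
        have e : j - i + -j = -i := by ring
        rw [e]; exact hz
      have : i = j := by omega
      rw [this]
  let Arr : ℤ → ℤ → Prop := fun i j => ∃ u ∈ V i, ∀ w ∈ V j,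
    Relation.TransGen (fun a b => Sim W (g₁ a) b) u w
  have arr_loop : ∀ i, ¬ Arr i i := by
    rintro i ⟨u, hu, h⟩
    exact no_loop h₁ hG (h u hu)
  have arr_trans : ∀ i j l, Arr i j → Arr j l → Arr i l := by
    rintro i j l ⟨u, hu, h⟩ ⟨v, hv, h'⟩
    exact ⟨u, hu, fun w hw => (h v hv).trans (h' w hw)⟩
  have arr_mk : ∀ i j (k : ℤ) u, 0 < k → u ∈ V i → (g₁.toEquiv ^ k) u ∈ V j → Arr i j := by
    intro i j k u hk hu hu'
    exact ⟨u, hu, fun w hw => transGen_zpow u w k hk (Or.inr ⟨V j, ⟨j, rfl⟩, hu', hw⟩)⟩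
  let Sh : ℤ → Prop := fun d => ∀ i, Arr i (i + d)
  have sh_add : ∀ d e, Sh d → Sh e → Sh (d + e) := by
    intro d e hd he i
    have := he (i + d)
    rw [add_assoc] at this
    exact arr_trans _ _ _ (hd i) this
  have sh_mul : ∀ d, Sh d → ∀ n : ℕ, Sh ((n + 1 : ℕ) * d) := by
    intro d hd n
    induction n with
    | zero => simpa using hd
    | succ n ih =>
      have := sh_add _ _ ih hd
      convert this using 1
      push_cast; ring
  have sh_mul' : ∀ d, Sh d → ∀ n : ℤ, 0 < n → Sh (n * d) := by
    intro d hd n hn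
    have := sh_mul d hd (n - 1).toNat
    convert this using 2
    omega
  have sh_no : ∀ d e, Sh d → Sh e → d < 0 → 0 < e → False := by
    intro d e hd he hd0 he0
    have := sh_add _ _ (sh_mul' d hd e he0) (sh_mul' e he (-d) (by omega)) 0
    have h0 : 0 + (e * d + -d * e) = 0 := by ring
    rw [h0] at this
    exact arr_loop 0 this
  have key : ∀ n : ℤ × ℤ, n ∈ {n : ℤ × ℤ | (⇑(g₁.toEquiv ^ n.1) '' (⇑(g₂.toEquiv ^ n.2) '' D)
        ∩ D).Nonempty} \ {((0 : ℤ), (0 : ℤ))} →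
      (0 < n.1 * n.2 ∧ ∃ d < 0, Sh d) ∨ (n.1 * n.2 < 0 ∧ ∃ d > 0, Sh d) := by
    rintro ⟨a, b⟩ ⟨⟨_, ⟨_, ⟨u, hu, rfl⟩, rfl⟩, hw⟩, hne⟩
    simp only at hw ⊢
    have ha : a ≠ 0 := by
      rintro rfl
      have hb : b = 0 := hfree₂ b u hu (by simpa using hw)
      exact hne (by simp [hb])
    have hb : b ≠ 0 := by
      rintro rfl
      exact z₁ a ha u hu (by simpa using hw)
    have pos : 0 < a → Sh (-b) := by
      intro ha i
      refine arr_mk _ _ a _ ha (hVm i u hu) ?_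
      have := hVm (i + -b) _ hw
      rw [hco', hadd] at this
      rw [hco']
      simpa using this
    have neg : a < 0 → Sh b := by
      intro ha i
      refine arr_mk _ _ (-a) _ (by omega) (hVm i _ hw) ?_
      have := hVm (i + b) _ hu
      rw [← hadd g₂.toEquiv i b] at this
      rw [hco', hadd g₁.toEquiv]
      simpa using this
    rcases lt_or_gt_of_ne ha with ha | ha <;> rcases lt_or_gt_of_ne hb with hb | hb
    · exact Or.inl ⟨mul_pos_of_neg_of_neg ha hb, b, hb, neg ha⟩
    · exact Or.inr ⟨mul_neg_of_neg_of_pos ha hb, b, hb, neg ha⟩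
    · exact Or.inr ⟨mul_neg_of_pos_of_neg ha hb, -b, by omega, pos ha⟩
    · exact Or.inl ⟨mul_pos ha hb, -b, by omega, pos ha⟩
  by_cases hneg : ∃ d < 0, Sh d
  · left
    intro n hn
    rcases key n hn with h | ⟨-, e, he, hs⟩
    · exact h.1
    · obtain ⟨d, hd, hs'⟩ := hneg
      exact (sh_no d e hs' hs hd he).elim
  · right
    intro n hn
    rcases key n hn with h | h
    · exact absurd h.2 hneg
    · exact h.1
end

section
/- Let h be a homeomorphism of ℝ² whose positive singular set is nonempty, and let φ be a minimal action of ℤ² on ℝ² by homeomorphisms such that φ(n) commutes with h for every n ∈ ℤ × ℤ. Then the positive singular set of h is dense in ℝ². -/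
/-- `(x, y)` is a singular couple for a homeomorphism `h` of the plane: there are points
`z k → x` and positive integers `n k → +∞` with `h ^ (n k) (z k) → y`. -/
def SingularCouple (h : (ℝ × ℝ) ≃ₜ (ℝ × ℝ)) (x y : ℝ × ℝ) : Prop :=
  ∃ z : ℕ → ℝ × ℝ, ∃ n : ℕ → ℕ, (∀ k, 0 < n k) ∧
    Filter.Tendsto z Filter.atTop (nhds x) ∧
    Filter.Tendsto n Filter.atTop Filter.atTop ∧
    Filter.Tendsto (fun k => (h.toEquiv ^ n k) (z k)) Filter.atTop (nhds y)

/-- The positive singular set of `h`: points `x` such that `(x, y)` is a singular couple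
for some `y`. -/
def PositiveSingularSet (h : (ℝ × ℝ) ≃ₜ (ℝ × ℝ)) : Set (ℝ × ℝ) :=
  {x | ∃ y : ℝ × ℝ, SingularCouple h x y}

/-- If `h` has a nonempty positive singular set and `φ` is a minimal ℤ²-action on the plane
by homeomorphisms commuting with `h` (the action, a group homomorphism, is encoded by
`φ (m + n) = φ m ∘ φ n`), then the positive singular set of `h` is dense in the plane. -/
theorem dense_positiveSingularSet_of_minimal_commuting_action
    (h : (ℝ × ℝ) ≃ₜ (ℝ × ℝ)) (hne : (PositiveSingularSet h).Nonempty)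
    (φ : ℤ × ℤ → ((ℝ × ℝ) ≃ₜ (ℝ × ℝ)))
    (hφ : ∀ m n : ℤ × ℤ, φ (m + n) = (φ n).trans (φ m))
    (hmin : ∀ x : ℝ × ℝ, Dense (Set.range fun n : ℤ × ℤ => φ n x))
    (hcomm : ∀ n : ℤ × ℤ, ∀ z : ℝ × ℝ, φ n (h z) = h (φ n z)) :
    Dense (PositiveSingularSet h) := by
  obtain ⟨x, y, z, n, hn, hz, hnt, hy⟩ := hne
  refine (hmin x).mono ?_
  rintro _ ⟨m, rfl⟩
  have key : ∀ (j : ℕ) (w : ℝ × ℝ),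
      (h.toEquiv ^ j) (φ m w) = φ m ((h.toEquiv ^ j) w) := by
    intro j
    induction j with
    | zero => intro w; rfl
    | succ j ih =>
      intro w
      rw [pow_succ, Equiv.Perm.mul_apply, Equiv.Perm.mul_apply, ← ih]
      exact congrArg _ (hcomm m w).symm
  refine ⟨φ m y, fun k => φ m (z k), n, hn, ((φ m).continuous.tendsto x).comp hz, hnt, ?_⟩
  simp only [key]
  exact ((φ m).continuous.tendsto y).comp hy
end

section
/- Let g₁ and g₂ be commuting homeomorphisms of ℝ² such that the ℤ²-action φ(n₁,n₂) = g₁^{n₁} ∘ g₂^{n₂} is minimal, and suppose that the composition g₁ ∘ g₂ admits at least one singular couple. Then for every nonempty open subset D of ℝ² there exist positive integers N₁ and N₂ such that g₁^{N₁}(g₂^{N₂}(D)) ∩ D ≠ ∅. -/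
theorem cont_pow_aux (f : Equiv.Perm (ℝ × ℝ)) (hf : Continuous f) (n : ℕ) :
    Continuous (⇑(f ^ n)) := by
  induction n with
  | zero => simpa using continuous_id
  | succ k ih =>
    rw [pow_succ, Equiv.Perm.coe_mul]
    exact ih.comp hf

theorem cont_zpow_aux (g : (ℝ × ℝ) ≃ₜ (ℝ × ℝ)) (n : ℤ) :
    Continuous (⇑((g.toEquiv : Equiv.Perm (ℝ × ℝ)) ^ n)) := by
  obtain ⟨m, rfl | rfl⟩ := n.eq_nat_or_neg
  · rw [zpow_natCast]
    exact cont_pow_aux _ g.continuous m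
  · rw [zpow_neg, zpow_natCast, ← inv_pow]
    exact cont_pow_aux _ g.symm.continuous m

/-- If `g₁`, `g₂` are commuting homeomorphisms of the plane generating a minimal
ℤ²-action `(n₁, n₂) ↦ g₁^{n₁} ∘ g₂^{n₂}`, and `g₁ ∘ g₂` admits a singular couple, then for
every nonempty open set `D` there are positive integers `N₁`, `N₂` with
`g₁^{N₁} (g₂^{N₂} (D)) ∩ D ≠ ∅`. -/
theorem positive_return_of_minimal_and_singular
    (g₁ g₂ : (ℝ × ℝ) ≃ₜ (ℝ × ℝ))
    (hcomm : ∀ z : ℝ × ℝ, g₁ (g₂ z) = g₂ (g₁ z))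
    (hmin : ∀ x : ℝ × ℝ,
      Dense (Set.range fun n : ℤ × ℤ => (g₁.toEquiv ^ n.1) ((g₂.toEquiv ^ n.2) x)))
    (hsing : ∃ x y : ℝ × ℝ, SingularCouple (g₂.trans g₁) x y)
    (D : Set (ℝ × ℝ)) (hD : IsOpen D) (hDne : D.Nonempty) :
    ∃ N₁ N₂ : ℕ, 0 < N₁ ∧ 0 < N₂ ∧
      ((⇑(g₁.toEquiv ^ (N₁ : ℤ)) '' (⇑(g₂.toEquiv ^ (N₂ : ℤ)) '' D)) ∩ D).Nonempty := by
  obtain ⟨x, y, z, n, -, hz, hn, hzy⟩ := hsing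
  have hc : Commute (g₁.toEquiv : Equiv.Perm (ℝ × ℝ)) (g₂.toEquiv : Equiv.Perm (ℝ × ℝ)) :=
    Equiv.ext hcomm
  have hg : ((g₂.trans g₁).toEquiv : Equiv.Perm (ℝ × ℝ))
      = (g₁.toEquiv : Equiv.Perm (ℝ × ℝ)) * (g₂.toEquiv : Equiv.Perm (ℝ × ℝ)) := rfl
  rw [hg] at hzy
  have c₁ := cont_zpow_aux g₁
  have c₂ := cont_zpow_aux g₂
  obtain ⟨_, hpD, ⟨⟨p, q⟩, rfl⟩⟩ := (hmin x).exists_mem_open hD hDne |>.imp fun _ h => h.symm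
  obtain ⟨_, hrD, ⟨⟨r, s⟩, rfl⟩⟩ := (hmin y).exists_mem_open hD hDne |>.imp fun _ h => h.symm
  generalize (g₁.toEquiv : Equiv.Perm (ℝ × ℝ)) = a at *
  generalize (g₂.toEquiv : Equiv.Perm (ℝ × ℝ)) = b at *
  have e₁ : ∀ᶠ k in Filter.atTop, (a ^ p) ((b ^ q) (z k)) ∈ D :=
    (((c₁ p).comp (c₂ q)).tendsto x).comp hz (hD.mem_nhds hpD)
  have e₂ : ∀ᶠ k in Filter.atTop, (a ^ r) ((b ^ s) (((a * b) ^ n k) (z k))) ∈ D :=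
    (((c₁ r).comp (c₂ s)).tendsto y).comp hzy (hD.mem_nhds hrD)
  have e₃ := hn.eventually_ge_atTop ((p - r).natAbs + (q - s).natAbs + 1)
  obtain ⟨k, ⟨h₁, h₂⟩, h₃⟩ := ((e₁.and e₂).and e₃).exists
  obtain ⟨N₁, hN₁⟩ := Int.eq_ofNat_of_zero_le (a := r - p + n k) (by omega)
  obtain ⟨N₂, hN₂⟩ := Int.eq_ofNat_of_zero_le (a := s - q + n k) (by omega)
  refine ⟨N₁, N₂, by omega, by omega, _, ⟨_, ⟨_, h₁, rfl⟩, rfl⟩, ?_⟩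
  have key : a ^ (N₁ : ℤ) * (b ^ (N₂ : ℤ) * (a ^ p * b ^ q)) = a ^ r * b ^ s * (a * b) ^ n k := by
    rw [← hN₁, ← hN₂, hc.mul_pow, ← zpow_natCast, ← zpow_natCast, ← mul_assoc (b ^ _),
      ← (hc.zpow_zpow p (s - q + n k)).eq, mul_assoc (a ^ p), ← zpow_add, ← mul_assoc, ← zpow_add,
      mul_assoc (a ^ r), ← mul_assoc (b ^ s), ← (hc.zpow_zpow (n k) s).eq, mul_assoc (a ^ (n k : ℤ)),
      ← zpow_add, ← mul_assoc, ← zpow_add]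
    congr 2 <;> ring
  have := congrArg (fun f : Equiv.Perm (ℝ × ℝ) => f (z k)) key
  exact this.symm ▸ h₂
end
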